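/- arXiv:math/0403250 — 5 statements merged into one kernel-verified Lean document; each statement's English description precedes it below -/
import Mathlib

section
/- Assume N ≥ 2. All elements of Γ_N of the form s_{ij}·γ_i·γ_j^{-1} (i ≠ j, γ ∈ Γ) are conjugate to one another in Γ_N. Moreover, for γ, γ' ∈ Γ∖{1} and indices i, j, the elements γ_i and γ'_j are conjugate in Γ_N if and only if γ and γ' are conjugate in Γ. -/
noncomputable section

/-- `SL(2,ℂ)`. -/
abbrev SL2 : Type := Matrix.SpecialLinearGroup (Fin 2) ℂ

/-- The permutation action of `S_N` on `Γ^N`, `(σ • f) i = f (σ⁻¹ i)`. -/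
def wphi (Γ : Type) [Group Γ] (N : ℕ) : Equiv.Perm (Fin N) →* MulAut (Fin N → Γ) where
  toFun σ := MulEquiv.arrowCongr σ (MulEquiv.refl Γ)
  map_one' := rfl
  map_mul' _ _ := rfl

/-- The wreath product `Γ_N = S_N ⋉ Γ^N`. -/
abbrev WP (Γ : Type) [Group Γ] (N : ℕ) : Type :=
  (Fin N → Γ) ⋊[wphi Γ N] Equiv.Perm (Fin N)

/-- `γ_i`: the element `γ ∈ Γ` placed in the `i`-th factor of `Γ^N ⊂ Γ_N`. -/
def tG {Γ : Type} [Group Γ] {N : ℕ} (i : Fin N) (γ : Γ) : WP Γ N :=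
  SemidirectProduct.inl (Pi.mulSingle i γ)

/-- The symplectic reflection `s_{ij} γ_i γ_j⁻¹` of type (S). -/
def tS {Γ : Type} [Group Γ] {N : ℕ} (i j : Fin N) (γ : Γ) : WP Γ N :=
  SemidirectProduct.inr (Equiv.swap i j) * tG i γ * (tG j γ)⁻¹

/-- The linear action of the wreath product `Γ_N` (for `Γ ⊂ SL(2,ℂ)`) on `V = L^{⊕N}`,
`(g · v) i = g.left i • v (g.right⁻¹ i)`. -/
def actL (Γ : Subgroup SL2) (N : ℕ) (g : WP Γ N) :
    (Fin N → Fin 2 → ℂ) →ₗ[ℂ] Fin N → Fin 2 → ℂ :=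
  LinearMap.pi fun i =>
    (Matrix.mulVecLin ((g.left i : SL2) : Matrix (Fin 2) (Fin 2) ℂ)).comp
      (LinearMap.proj (g.right⁻¹ i))

end

theorem aux_conj {Γ : Type} [Group Γ] {N : ℕ} (σ : Equiv.Perm (Fin N)) (i : Fin N) (γ : Γ) :
    (SemidirectProduct.inr σ : WP Γ N) * tG i γ * (SemidirectProduct.inr σ)⁻¹ = tG (σ i) γ := by
  unfold tG
  rw [← map_inv, ← SemidirectProduct.inl_aut]
  congr 1
  funext k
  change (Pi.mulSingle i γ : Fin N → Γ) (σ.symm k) = _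
  simp only [Pi.mulSingle_apply, Equiv.symm_apply_eq]

theorem aux_S {Γ : Type} [Group Γ] {N : ℕ} (i j : Fin N) (γ : Γ) :
    IsConj (SemidirectProduct.inr (Equiv.swap i j) : WP Γ N) (tS i j γ) := by
  rw [isConj_iff]
  refine ⟨tG j γ, ?_⟩
  have h := aux_conj (Equiv.swap i j) i γ
  rw [Equiv.swap_apply_left] at h
  unfold tS
  rw [← h]
  group

/-- for `N ≥ 2`, all elements `s_{ij} γ_i γ_j⁻¹` (`i ≠ j`, `γ ∈ Γ`) are conjugate
to one another in `Γ_N`; and for `γ, γ' ∈ Γ \ {1}`, the elements `γ_i` and `γ'_j` are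
conjugate in `Γ_N` iff `γ` and `γ'` are conjugate in `Γ`. -/
theorem stmt_1 (Γ : Type) [Group Γ] [Finite Γ] (N : ℕ) (hN : 2 ≤ N) :
    (∀ (i j i' j' : Fin N) (γ γ' : Γ), i ≠ j → i' ≠ j' →
      IsConj (tS i j γ) (tS i' j' γ')) ∧
    (∀ (i j : Fin N) (γ γ' : Γ), γ ≠ 1 → γ' ≠ 1 →
      (IsConj (tG (Γ := Γ) i γ) (tG j γ') ↔ IsConj γ γ')) := by
  constructor
  · intro i j i' j' γ γ' h h'
    refine (aux_S i j γ).symm.trans (IsConj.trans ?_ (aux_S i' j' γ'))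
    exact MonoidHom.map_isConj
      (SemidirectProduct.inr : Equiv.Perm (Fin N) →* WP Γ N) (Equiv.Perm.isConj_swap h h')
  · intro i j γ γ' h h'
    constructor
    · intro hc
      obtain ⟨c, hc⟩ := isConj_iff.1 hc
      rw [mul_inv_eq_iff_eq_mul] at hc
      have h1 := congrFun (congrArg SemidirectProduct.left hc) (c.right i)
      change c.left (c.right i) * (Pi.mulSingle i γ : Fin N → Γ) (c.right.symm (c.right i)) =
        (Pi.mulSingle j γ' : Fin N → Γ) (c.right i) * c.left (c.right i) at h1
      rw [Equiv.symm_apply_apply, Pi.mulSingle_eq_same] at h1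
      by_cases hk : c.right i = j
      · rw [hk, Pi.mulSingle_eq_same] at h1
        exact isConj_iff.2 ⟨c.left j, mul_inv_eq_iff_eq_mul.2 h1⟩
      · rw [Pi.mulSingle_eq_of_ne hk, one_mul] at h1
        exact absurd (mul_eq_left.1 h1) h
    · intro hc
      have h1 : IsConj (tG i γ : WP Γ N) (tG j γ) := by
        refine isConj_iff.2 ⟨SemidirectProduct.inr (Equiv.swap i j), ?_⟩
        rw [aux_conj, Equiv.swap_apply_left]
      refine h1.trans ?_
      exact MonoidHom.map_isConj ((SemidirectProduct.inl : (Fin N → Γ) →* WP Γ N).comp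
        (MonoidHom.mulSingle (fun _ : Fin N => Γ) j)) hc
end

section
/- In the smash product Γ_N # TV (the ℂ-algebra generated by the group Γ_N and the vector space V with relations g·v·g^{-1} = g(v) for g ∈ Γ_N, v ∈ V, realizable as an explicit quotient of a free algebra), the two-sided ideal generated by the elements [u,v] − κ(u,v) for u, v ∈ V, where κ(u,v) = ω_V(u,v)·1 + Σ_{s ∈ 𝒮} f_s · ω_s(u,v) · s, coincides with the two-sided ideal generated by the relators of (R1): [x_i,y_i] − 1 − (k/2)Σ_{j≠i}Σ_{γ∈Γ} s_{ij}γ_iγ_j^{-1} − Σ_{γ∈Γ∖{1}} c_γ γ_i for all i, and (R2): [u_i,v_j] + (k/2)Σ_{γ∈Γ} ω_L(γu,v) s_{ij}γ_iγ_j^{-1} for all u, v ∈ L and i ≠ j. In particular the two presentations define the same algebra H_{1,k,c}(Γ_N). -/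
noncomputable section

noncomputable section

variable (Γ : Subgroup SL2) [Fintype Γ] [DecidableEq Γ] (N : ℕ)

/-- Generator `g ∈ Γ_N` in the free algebra on `Γ_N ⊕ {x_i, y_i}`. -/
def nG (g : WP Γ N) : FreeAlgebra ℂ (WP Γ N ⊕ Fin N × Fin 2) :=
  FreeAlgebra.ι ℂ (Sum.inl g)

/-- Generator `x_i` (for `p = 0`) resp. `y_i` (for `p = 1`) in the free algebra. -/
def nX (i : Fin N) (p : Fin 2) : FreeAlgebra ℂ (WP Γ N ⊕ Fin N × Fin 2) :=
  FreeAlgebra.ι ℂ (Sum.inr (i, p))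

/-- The general vector `v ∈ V = L^{⊕N}` inside the free algebra. -/
def nV (v : Fin N → Fin 2 → ℂ) : FreeAlgebra ℂ (WP Γ N ⊕ Fin N × Fin 2) :=
  ∑ i : Fin N, ∑ p : Fin 2, v i p • nX Γ N i p

/-- The standard symplectic form `ω_L` on `L = ℂ²`. -/
def omL (u v : Fin 2 → ℂ) : ℂ := u 0 * v 1 - u 1 * v 0

/-- The symplectic form `ω_V = ω_L^{⊕N}` on `V = L^{⊕N}`. -/
def omV (u v : Fin N → Fin 2 → ℂ) : ℂ := ∑ i : Fin N, omL (u i) (v i)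

/-- The relations of the smash product `Γ_N ♯ TV`: the group relations of `Γ_N` and the
relations `g v g⁻¹ = g(v)` for `v ∈ V`. -/
inductive SmashRel :
    FreeAlgebra ℂ (WP Γ N ⊕ Fin N × Fin 2) → FreeAlgebra ℂ (WP Γ N ⊕ Fin N × Fin 2) → Prop
  | grp_mul (g h : WP Γ N) : SmashRel (nG Γ N g * nG Γ N h) (nG Γ N (g * h))
  | grp_one : SmashRel (nG Γ N 1) 1
  | grp_conj (g : WP Γ N) (v : Fin N → Fin 2 → ℂ) :
      SmashRel (nG Γ N g * nV Γ N v * nG Γ N g⁻¹) (nV Γ N (actL Γ N g v))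

/-- The smash product `Γ_N ♯ TV`, realized as a quotient of the free algebra. -/
abbrev Smash : Type := RingQuot (SmashRel Γ N)

/-- The image of the group element `g` in the smash product. -/
def sG (g : WP Γ N) : Smash Γ N := RingQuot.mkAlgHom ℂ (SmashRel Γ N) (nG Γ N g)

/-- The image of the vector `v ∈ V` in the smash product. -/
def sV (v : Fin N → Fin 2 → ℂ) : Smash Γ N := RingQuot.mkAlgHom ℂ (SmashRel Γ N) (nV Γ N v)

/-- The image of `x_i, y_i` in the smash product. -/
def sX (i : Fin N) (p : Fin 2) : Smash Γ N := RingQuot.mkAlgHom ℂ (SmashRel Γ N) (nX Γ N i p)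

/-- The set `𝒮` of symplectic reflections of `Γ_N`. -/
def SRefl : Set (WP Γ N) :=
  {s | Module.finrank ℂ (LinearMap.range (LinearMap.id - actL Γ N s)) = 2}

/-- The projection of `V` onto `Im(Id - s)` along `Ker(Id - s)` (for `s` of finite
order), namely `Id` minus the averaging operator `(1/ord s) ∑_m s^m`. -/
def projS (s : WP Γ N) : (Fin N → Fin 2 → ℂ) →ₗ[ℂ] Fin N → Fin 2 → ℂ :=
  LinearMap.id - (orderOf s : ℂ)⁻¹ • ∑ p ∈ Finset.range (orderOf s), actL Γ N (s ^ p)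

/-- The form `ω_s`: the bilinear form on `V` which coincides with `ω_V` on
`Im(Id - s)` and has `Ker(Id - s)` as its radical. -/
def omS (s : WP Γ N) (u v : Fin N → Fin 2 → ℂ) : ℂ :=
  omV N (projS Γ N s u) (projS Γ N s v)

/-- The element `κ(u,v) = ω_V(u,v)·1 + ∑_{s ∈ 𝒮} f_s ω_s(u,v) s` of the smash product. -/
def kappa (f : WP Γ N → ℂ) (u v : Fin N → Fin 2 → ℂ) : Smash Γ N :=
  omV N u v • 1 + ∑ᶠ s ∈ SRefl Γ N, (f s * omS Γ N s u v) • sG Γ N s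

end

section helpers
set_option linter.unusedSectionVars false
set_option linter.unusedSimpArgs false
open Matrix
attribute [-simp] Matrix.mulVec_fin_two

abbrev mxx {Γ : Subgroup SL2} (γ : Γ) : Matrix (Fin 2) (Fin 2) ℂ := ((γ : SL2) : Matrix (Fin 2) (Fin 2) ℂ)

lemma mt_one {Γ : Subgroup SL2} : mxx (1 : Γ) = 1 := by simp [mxx]
lemma mt_mul {Γ : Subgroup SL2} (a b : Γ) : mxx (a * b) = mxx a * mxx b := by simp [mxx]
lemma mt_inj {Γ : Subgroup SL2} {a b : Γ} (h : mxx a = mxx b) : a = b :=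
  Subtype.ext (Subtype.ext h)

lemma mt_inv_mulVec {Γ : Subgroup SL2} (a : Γ) (v : Fin 2 → ℂ) :
    mxx a⁻¹ *ᵥ (mxx a *ᵥ v) = v := by
  rw [Matrix.mulVec_mulVec, ← mt_mul]; simp [mt_one]

lemma mt_mulVec_inv {Γ : Subgroup SL2} (a : Γ) (v : Fin 2 → ℂ) :
    mxx a *ᵥ (mxx a⁻¹ *ᵥ v) = v := by
  rw [Matrix.mulVec_mulVec, ← mt_mul]; simp [mt_one]

lemma mt_eq_one_of {Γ : Subgroup SL2} (a : Γ) (h : ∀ v, mxx a *ᵥ v = v) : a = 1 := by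
  apply mt_inj
  rw [mt_one]
  apply Matrix.ext_of_mulVec_single
  intro i
  rw [h, Matrix.one_mulVec]

lemma det_mt {Γ : Subgroup SL2} (a : Γ) : mxx a 0 0 * mxx a 1 1 - mxx a 0 1 * mxx a 1 0 = 1 := by
  have := (a : SL2).2
  rwa [Matrix.det_fin_two] at this

lemma omL_mt {Γ : Subgroup SL2} (a : Γ) (u v : Fin 2 → ℂ) :
    omL (mxx a *ᵥ u) (mxx a *ᵥ v) = omL u v := by
  have := det_mt a
  simp only [omL, Matrix.mulVec, dotProduct, Fin.sum_univ_two]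
  linear_combination (u 0 * v 1 - u 1 * v 0) * this

lemma omL_mt_inv_right {Γ : Subgroup SL2} (a : Γ) (u v : Fin 2 → ℂ) :
    omL u (mxx a⁻¹ *ᵥ v) = omL (mxx a *ᵥ u) v := by
  rw [← omL_mt a, mt_mulVec_inv]

lemma det_ne {Γ : Subgroup SL2} [Finite Γ] (a : Γ) (ha : a ≠ 1) :
    (1 - mxx a).det ≠ 0 := by
  intro hdet
  apply ha
  have hd := det_mt a
  have ht : mxx a 0 0 + mxx a 1 1 = 2 := by
    rw [Matrix.det_fin_two] at hdet
    simp at hdet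
    linear_combination hd - hdet
  set D := mxx a - 1 with hD
  have hDD : D * D = 0 := by
    ext i j
    fin_cases i <;> fin_cases j <;>
      simp [hD, Matrix.mul_apply, Fin.sum_univ_two]
    · linear_combination (mxx a 0 0) * ht - hd
    · linear_combination (mxx a 0 1) * ht
    · linear_combination (mxx a 1 0) * ht
    · linear_combination (mxx a 1 1) * ht - hd
  have hpow : ∀ n : ℕ, mxx (a ^ n) = 1 + (n : ℂ) • D := by
    intro n
    induction n with
    | zero => simp [mt_one]
    | succ n ih =>
      have h1 : mxx a = 1 + D := by simp [hD]
      rw [pow_succ, mt_mul, ih, h1]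
      simp only [add_mul, mul_add, one_mul, mul_one, Matrix.smul_mul, hDD, smul_zero, add_zero]
      push_cast
      rw [add_smul, one_smul]; abel
  have h2 := hpow (orderOf a)
  rw [pow_orderOf_eq_one, mt_one] at h2
  have h3 : ((orderOf a : ℕ) : ℂ) • D = 0 := by
    simpa using h2.symm
  have h4 : D = 0 := by
    rcases smul_eq_zero.1 h3 with h | h
    · exact absurd (Nat.cast_eq_zero.1 h) (orderOf_pos a).ne'
    · exact h
  apply mt_inj
  rw [mt_one]
  exact sub_eq_zero.1 h4

lemma fix_zero {Γ : Subgroup SL2} [Finite Γ] (a : Γ) (ha : a ≠ 1) (v : Fin 2 → ℂ)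
    (h : mxx a *ᵥ v = v) : v = 0 := by
  apply Matrix.eq_zero_of_mulVec_eq_zero (det_ne a ha)
  rw [Matrix.sub_mulVec, h]; simp

lemma surj_sub {Γ : Subgroup SL2} [Finite Γ] (a : Γ) (ha : a ≠ 1) (w : Fin 2 → ℂ) :
    ∃ v, v - mxx a *ᵥ v = w := by
  refine ⟨(1 - mxx a)⁻¹ *ᵥ w, ?_⟩
  have : (1 - mxx a) *ᵥ ((1 - mxx a)⁻¹ *ᵥ w) = w := by
    rw [Matrix.mulVec_mulVec, Matrix.mul_nonsing_inv _ (IsUnit.mk0 _ (det_ne a ha))]; simp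
  rw [Matrix.sub_mulVec] at this
  simpa using this

variable {Γ : Subgroup SL2} {N : ℕ}

lemma actL_apply (g : WP Γ N) (v : Fin N → Fin 2 → ℂ) (i : Fin N) :
    actL Γ N g v i = mxx (g.left i) *ᵥ v (g.right⁻¹ i) := rfl

lemma actL_one (v : Fin N → Fin 2 → ℂ) : actL Γ N 1 v = v := by
  ext1 i; rw [actL_apply]; simp [mt_one]

lemma actL_mul (g h : WP Γ N) (v : Fin N → Fin 2 → ℂ) :
    actL Γ N (g * h) v = actL Γ N g (actL Γ N h v) := by
  ext1 i
  rw [actL_apply, actL_apply, actL_apply, Matrix.mulVec_mulVec, ← mt_mul]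
  rfl

lemma tG_left (i : Fin N) (γ : Γ) : (tG i γ : WP Γ N).left = Pi.mulSingle i γ := rfl
lemma tG_right (i : Fin N) (γ : Γ) : (tG i γ : WP Γ N).right = 1 := rfl

lemma tS_right (i j : Fin N) (γ : Γ) : (tS i j γ : WP Γ N).right = Equiv.swap i j := by
  simp [tS, tG]

lemma tS_left (i j : Fin N) (γ : Γ) (l : Fin N) : (tS i j γ : WP Γ N).left l =
    (Pi.mulSingle i γ : Fin N → Γ) (Equiv.swap i j l) *
      ((Pi.mulSingle j γ : Fin N → Γ) (Equiv.swap i j l))⁻¹ := by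
  have : (tS i j γ : WP Γ N) = SemidirectProduct.inr (Equiv.swap i j) *
      SemidirectProduct.inl (Pi.mulSingle i γ * (Pi.mulSingle j γ)⁻¹) := by
    rw [tS, tG, tG, map_mul, map_inv, mul_assoc]
  rw [this, SemidirectProduct.mul_left, SemidirectProduct.left_inr, SemidirectProduct.left_inl,
    one_mul]
  rfl

lemma tS_left_i {i j : Fin N} (h : i ≠ j) (γ : Γ) : (tS i j γ : WP Γ N).left i = γ⁻¹ := by
  rw [tS_left]; simp [Pi.mulSingle_apply, h.symm]
lemma tS_left_j {i j : Fin N} (h : i ≠ j) (γ : Γ) : (tS i j γ : WP Γ N).left j = γ := by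
  rw [tS_left]; simp [Pi.mulSingle_apply, h]
lemma tS_left_l {i j l : Fin N} (hi : l ≠ i) (hj : l ≠ j) (γ : Γ) :
    (tS i j γ : WP Γ N).left l = 1 := by
  rw [tS_left, Equiv.swap_apply_of_ne_of_ne hi hj]; simp [Pi.mulSingle_apply, hi, hj]

lemma tS_symm {i j : Fin N} (h : i ≠ j) (γ : Γ) : (tS j i γ⁻¹ : WP Γ N) = tS i j γ := by
  apply SemidirectProduct.ext
  · ext1 l
    by_cases hi : l = i
    · subst hi; rw [tS_left_i h, tS_left_j h.symm]
    by_cases hj : l = j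
    · subst hj; rw [tS_left_j h, tS_left_i h.symm, inv_inv]
    rw [tS_left_l hi hj, tS_left_l hj hi]
  · rw [tS_right, tS_right, Equiv.swap_comm]

lemma act_tS_i {i j : Fin N} (h : i ≠ j) (γ : Γ) (v : Fin N → Fin 2 → ℂ) :
    actL Γ N (tS i j γ) v i = mxx γ⁻¹ *ᵥ v j := by
  rw [actL_apply, tS_left_i h, tS_right]; simp
lemma act_tS_j {i j : Fin N} (h : i ≠ j) (γ : Γ) (v : Fin N → Fin 2 → ℂ) :
    actL Γ N (tS i j γ) v j = mxx γ *ᵥ v i := by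
  rw [actL_apply, tS_left_j h, tS_right]; simp
lemma act_tS_l {i j l : Fin N} (hi : l ≠ i) (hj : l ≠ j) (γ : Γ) (v : Fin N → Fin 2 → ℂ) :
    actL Γ N (tS i j γ) v l = v l := by
  rw [actL_apply, tS_left_l hi hj, tS_right, Equiv.swap_inv,
    Equiv.swap_apply_of_ne_of_ne hi hj, mt_one, Matrix.one_mulVec]

lemma act_tG_i (i : Fin N) (γ : Γ) (v : Fin N → Fin 2 → ℂ) :
    actL Γ N (tG i γ) v i = mxx γ *ᵥ v i := by
  rw [actL_apply, tG_left, tG_right]; simp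
lemma act_tG_l {i l : Fin N} (h : l ≠ i) (γ : Γ) (v : Fin N → Fin 2 → ℂ) :
    actL Γ N (tG i γ) v l = v l := by
  rw [actL_apply, tG_left, tG_right]; simp [h, mt_one]

lemma tS_sq {i j : Fin N} (h : i ≠ j) (γ : Γ) : (tS i j γ : WP Γ N) ^ 2 = 1 := by
  rw [pow_two]
  apply SemidirectProduct.ext
  · ext1 l
    have : (tS i j γ * tS i j γ : WP Γ N).left l =
      (tS i j γ : WP Γ N).left l * (tS i j γ : WP Γ N).left ((tS i j γ : WP Γ N).right⁻¹ l) := rfl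
    rw [this, tS_right]
    by_cases hi : l = i
    · subst hi; simp [tS_left_i h, tS_left_j h]
    by_cases hj : l = j
    · subst hj; simp [tS_left_i h, tS_left_j h]
    rw [Equiv.swap_inv, Equiv.swap_apply_of_ne_of_ne hi hj, tS_left_l hi hj]; simp
  · rw [SemidirectProduct.mul_right, tS_right]; simp

lemma tS_ne_one {i j : Fin N} (h : i ≠ j) (γ : Γ) : (tS i j γ : WP Γ N) ≠ 1 := by
  intro h1
  have := congrArg SemidirectProduct.right h1
  rw [tS_right] at this
  have h2 := congrArg (fun e : Equiv.Perm (Fin N) => e i) this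
  simp at h2
  exact h h2.symm

lemma orderOf_tS {i j : Fin N} (h : i ≠ j) (γ : Γ) : orderOf (tS i j γ : WP Γ N) = 2 :=
  orderOf_eq_prime (tS_sq h γ) (tS_ne_one h γ)

lemma projS_tS {i j : Fin N} (h : i ≠ j) (γ : Γ) (u : Fin N → Fin 2 → ℂ) :
    projS Γ N (tS i j γ) u = (2⁻¹ : ℂ) • (u - actL Γ N (tS i j γ) u) := by
  rw [projS, orderOf_tS h]
  simp only [Finset.sum_range_succ, Finset.sum_range_zero, zero_add, pow_zero, pow_one,
    LinearMap.sub_apply, LinearMap.smul_apply, LinearMap.add_apply, LinearMap.id_apply, actL_one]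
  push_cast
  module

lemma omL_smul_left (a : ℂ) (u v) : omL (a • u) v = a * omL u v := by
  simp [omL]; ring
lemma omL_smul_right (a : ℂ) (u v) : omL u (a • v) = a * omL u v := by
  simp [omL]; ring
lemma omL_sub_left (u u' v) : omL (u - u') v = omL u v - omL u' v := by
  simp [omL]; ring
lemma omL_sub_right (u v v') : omL u (v - v') = omL u v - omL u v' := by
  simp [omL]; ring
lemma omL_zero_left (v) : omL 0 v = 0 := by simp [omL]
lemma omL_zero_right (v) : omL v 0 = 0 := by simp [omL]

lemma omS_tS {i j : Fin N} (h : i ≠ j) (γ : Γ) (u v : Fin N → Fin 2 → ℂ) :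
    omS Γ N (tS i j γ) u v = 2⁻¹ * (omL (u i) (v i) - omL (mxx γ *ᵥ u i) (v j))
      + 2⁻¹ * (omL (u j) (v j) - omL (mxx γ⁻¹ *ᵥ u j) (v i)) := by
  rw [omS, omV, Finset.sum_eq_add i j h]
  · simp only [projS_tS h, Pi.smul_apply, Pi.sub_apply, act_tS_i h, act_tS_j h,
      omL_smul_left, omL_smul_right, omL_sub_left, omL_sub_right]
    simp only [omL_mt]
    rw [omL_mt_inv_right γ (u i)]
    have h1 : omL (u j) (mxx γ *ᵥ v i) = omL (mxx γ⁻¹ *ᵥ u j) (v i) := by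
      rw [← omL_mt_inv_right, inv_inv]
    rw [h1]
    ring
  · rintro l - ⟨hi, hj⟩
    simp only [projS_tS h, Pi.smul_apply, Pi.sub_apply, act_tS_l hi hj]
    simp [omL]
  · simp
  · simp

instance [Finite Γ] : Finite (WP Γ N) :=
  Finite.of_equiv _ SemidirectProduct.equivProd.symm

lemma sum_fixed (s : WP Γ N) (u : Fin N → Fin 2 → ℂ) :
    actL Γ N s ((∑ p ∈ Finset.range (orderOf s), actL Γ N (s ^ p)) u) =
      (∑ p ∈ Finset.range (orderOf s), actL Γ N (s ^ p)) u := by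
  have h : ∀ n : ℕ, (∑ p ∈ Finset.range n, actL Γ N s (actL Γ N (s ^ p) u)) + u
     = (∑ p ∈ Finset.range n, actL Γ N (s ^ p) u) + actL Γ N (s ^ n) u := by
    intro n
    have h1 := Finset.sum_range_succ (fun p => actL Γ N (s ^ p) u) n
    have h2 := Finset.sum_range_succ' (fun p => actL Γ N (s ^ p) u) n
    rw [← h1, h2]
    simp only [pow_succ', actL_mul, pow_zero, actL_one]
  have := h (orderOf s)
  rw [pow_orderOf_eq_one, actL_one] at this
  simpa using this

lemma pow_tG_l {i l : Fin N} (h : l ≠ i) (γ : Γ) (p : ℕ) (v : Fin N → Fin 2 → ℂ) :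
    actL Γ N (tG i γ ^ p) v l = v l := by
  induction p with
  | zero => rw [pow_zero, actL_one]
  | succ p ih => rw [pow_succ', actL_mul, act_tG_l h, ih]

lemma projS_tG [Finite Γ] (i : Fin N) (γ : Γ) (hγ : γ ≠ 1) (u : Fin N → Fin 2 → ℂ) :
    projS Γ N (tG i γ) u = Pi.single i (u i) := by
  have hf := sum_fixed (tG i γ) u
  ext1 l
  by_cases hl : l = i
  · subst hl
    have h1 := congrFun hf l
    rw [act_tG_i] at h1
    have h0 := fix_zero γ hγ _ h1
    rw [projS, LinearMap.sub_apply, LinearMap.smul_apply, Pi.sub_apply, Pi.smul_apply, h0]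
    simp
  · rw [projS, LinearMap.sub_apply, LinearMap.smul_apply, Pi.sub_apply, Pi.smul_apply,
      LinearMap.sum_apply, Finset.sum_apply]
    simp only [pow_tG_l hl]
    have : (orderOf (tG i γ : WP Γ N) : ℂ) ≠ 0 := Nat.cast_ne_zero.2 (orderOf_pos _).ne'
    simp only [Finset.sum_const, Finset.card_range, LinearMap.id_apply]
    rw [← Nat.cast_smul_eq_nsmul ℂ, smul_smul, inv_mul_cancel₀ this]
    simp [hl]

lemma omS_tG [Finite Γ] (i : Fin N) (γ : Γ) (hγ : γ ≠ 1) (u v : Fin N → Fin 2 → ℂ) :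
    omS Γ N (tG i γ) u v = omL (u i) (v i) := by
  rw [omS, omV, projS_tG i γ hγ, projS_tG i γ hγ, Finset.sum_eq_single i]
  · simp
  · intro l _ hl; simp [hl, omL]
  · simp

/-! classification -/

def dS (s : WP Γ N) : (Fin N → Fin 2 → ℂ) →ₗ[ℂ] (Fin N → Fin 2 → ℂ) :=
  LinearMap.id - actL Γ N s

lemma dS_apply (s : WP Γ N) (v : Fin N → Fin 2 → ℂ) : dS s v = v - actL Γ N s v := rfl

lemma mem_SRefl_iff (s : WP Γ N) :
    s ∈ SRefl Γ N ↔ Module.finrank ℂ (LinearMap.range (dS s)) = 2 := Iff.rfl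

lemma finrank_eq_two {f : (Fin 2 → ℂ) →ₗ[ℂ] (Fin N → Fin 2 → ℂ)}
    (hf : Function.Injective f) : Module.finrank ℂ (LinearMap.range f) = 2 := by
  rw [LinearMap.finrank_range_of_inj hf]; simp

lemma finrank_congr' {A B : Submodule ℂ (Fin N → Fin 2 → ℂ)} (h : A = B) :
    Module.finrank ℂ A = Module.finrank ℂ B := by rw [h]

def mapS (i j : Fin N) (M : Matrix (Fin 2) (Fin 2) ℂ) : (Fin 2 → ℂ) →ₗ[ℂ] (Fin N → Fin 2 → ℂ) :=
  LinearMap.single ℂ (fun _ => Fin 2 → ℂ) i -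
    (LinearMap.single ℂ (fun _ => Fin 2 → ℂ) j).comp (Matrix.mulVecLin M)

lemma mapS_apply (i j : Fin N) (M) (a) : mapS i j M a = Pi.single i a - Pi.single j (M *ᵥ a) := rfl

lemma mapS_inj {i j : Fin N} (h : i ≠ j) (M) : Function.Injective (mapS i j M) := by
  intro a b hab
  have := congrFun hab i
  simpa [mapS_apply, h] using this

lemma tS_mem {i j : Fin N} (h : i ≠ j) (γ : Γ) : tS i j γ ∈ SRefl Γ N := by
  rw [mem_SRefl_iff]
  refine Eq.trans ?_ (finrank_eq_two (mapS_inj h (mxx γ)))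
  apply finrank_congr'
  apply le_antisymm
  · rintro _ ⟨u, rfl⟩
    refine ⟨u i - mxx γ⁻¹ *ᵥ u j, ?_⟩
    rw [mapS_apply, dS_apply]
    ext1 l
    by_cases hi : l = i
    · subst hi; simp [act_tS_i h, h]
    by_cases hj : l = j
    · subst hj; simp [act_tS_j h, h.symm, Matrix.mulVec_sub, mt_mulVec_inv, -Matrix.mulVec_mulVec, -InvMemClass.coe_inv]
    simp [act_tS_l hi hj, hi, hj]
  · rintro _ ⟨a, rfl⟩
    refine ⟨Pi.single i a, ?_⟩
    rw [mapS_apply, dS_apply]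
    ext1 l
    by_cases hi : l = i
    · subst hi; simp [act_tS_i h, h, h.symm]
    by_cases hj : l = j
    · subst hj; simp [act_tS_j h, h.symm]
    simp [act_tS_l hi hj, hi, hj]

lemma single_inj (i : Fin N) :
    Function.Injective (LinearMap.single ℂ (fun _ : Fin N => Fin 2 → ℂ) i) :=
  Pi.single_injective (M := fun _ : Fin N => Fin 2 → ℂ) i

lemma tG_range [Finite Γ] (s : WP Γ N) (hs : s.right = 1) (i : Fin N) (h : s.left i ≠ 1) :
    LinearMap.range (LinearMap.single ℂ (fun _ : Fin N => Fin 2 → ℂ) i) ≤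
      LinearMap.range (dS s) := by
  rintro _ ⟨a, rfl⟩
  obtain ⟨v, hv⟩ := surj_sub _ h a
  refine ⟨Pi.single i v, ?_⟩
  rw [dS_apply]
  ext1 l
  rw [Pi.sub_apply, actL_apply, hs, inv_one, Equiv.Perm.one_apply]
  by_cases hi : l = i
  · subst hi; simpa using hv
  · simp [hi]

lemma tG_mem [Finite Γ] (i : Fin N) (γ : Γ) (hγ : γ ≠ 1) : tG i γ ∈ SRefl Γ N := by
  rw [mem_SRefl_iff]
  refine Eq.trans ?_ (finrank_eq_two (single_inj i))
  apply finrank_congr'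
  apply le_antisymm
  · rintro _ ⟨u, rfl⟩
    refine ⟨u i - mxx γ *ᵥ u i, ?_⟩
    rw [dS_apply]
    ext1 l
    by_cases hi : l = i
    · subst hi; simp [act_tG_i]
    simp [act_tG_l hi, hi]
  · apply tG_range
    · rfl
    · simpa [tG_left] using hγ

lemma mem_SRefl [Finite Γ] (s : WP Γ N) : s ∈ SRefl Γ N ↔
    (∃ i, ∃ γ : Γ, γ ≠ 1 ∧ s = tG i γ) ∨ (∃ i j, ∃ γ : Γ, i ≠ j ∧ s = tS i j γ) := by
  constructor
  swap
  · rintro (⟨i, γ, h, rfl⟩ | ⟨i, j, γ, h, rfl⟩)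
    · exact tG_mem i γ h
    · exact tS_mem h γ
  intro hs
  rw [mem_SRefl_iff] at hs
  by_cases hσ : s.right = 1
  · left
    have : ∃ i, s.left i ≠ 1 := by
      by_contra! hall
      have h1 : s = 1 := SemidirectProduct.ext (funext hall) hσ
      have h0 : dS s = 0 := by
        apply LinearMap.ext
        intro v
        rw [h1, dS_apply, actL_one, sub_self]; rfl
      rw [h0, LinearMap.range_zero, finrank_bot] at hs
      exact absurd hs (by norm_num)
    obtain ⟨i, hi⟩ := this
    refine ⟨i, s.left i, hi, ?_⟩
    have heq := Submodule.eq_of_le_of_finrank_eq (tG_range s hσ i hi)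
      (by rw [finrank_eq_two (single_inj i), hs])
    apply SemidirectProduct.ext
    · ext1 l
      rw [tG_left]
      by_cases hl : l = i
      · subst hl; simp
      · rw [Pi.mulSingle_eq_of_ne hl]
        apply mt_eq_one_of
        intro v
        have : dS s (Pi.single l v) ∈
          LinearMap.range (LinearMap.single ℂ (fun _ : Fin N => Fin 2 → ℂ) i) := by
          rw [heq]; exact ⟨_, rfl⟩
        obtain ⟨a, ha⟩ := this
        have := congrFun ha l
        rw [dS_apply, Pi.sub_apply, actL_apply, hσ, inv_one, Equiv.Perm.one_apply] at this
        simp [hl] at this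
        exact (sub_eq_zero.1 this.symm).symm
    · rw [hσ, tG_right]
  · right
    have : ∃ i, s.right i ≠ i := by
      by_contra! hall
      exact hσ (Equiv.ext hall)
    obtain ⟨i, hi⟩ := this
    obtain ⟨j, hj⟩ : ∃ j, s.right i = j := ⟨_, rfl⟩
    rw [hj] at hi
    have hact : ∀ l a, dS s (Pi.single l a) =
        Pi.single l a - Pi.single (s.right l) (mxx (s.left (s.right l)) *ᵥ a) := by
      intro l a
      rw [dS_apply]
      congr 1
      ext1 m
      rw [actL_apply]
      by_cases hm : m = s.right l
      · subst hm; simp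
      · have : s.right⁻¹ m ≠ l := by
          rintro rfl; exact hm (by simp)
        rw [Pi.single_eq_of_ne this, Pi.single_eq_of_ne hm, Matrix.mulVec_zero]
    have hle : LinearMap.range (mapS i j (mxx (s.left j))) ≤
        LinearMap.range (dS s) := by
      rintro _ ⟨a, rfl⟩
      refine ⟨Pi.single i a, ?_⟩
      rw [hact, mapS_apply, hj]
    have heq := Submodule.eq_of_le_of_finrank_eq hle
      (by rw [finrank_eq_two (mapS_inj hi.symm _), hs])
    have key : ∀ l a, ∃ b, Pi.single i b - Pi.single j (mxx (s.left j) *ᵥ b) =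
        (Pi.single l a - Pi.single (s.right l) (mxx (s.left (s.right l)) *ᵥ a) :
          Fin N → Fin 2 → ℂ) := by
      intro l a
      have : dS s (Pi.single l a) ∈
          LinearMap.range (mapS i j (mxx (s.left j))) := by
        rw [heq]; exact ⟨_, rfl⟩
      obtain ⟨b, hb⟩ := this
      exact ⟨b, by rw [← hact, ← hb, mapS_apply]⟩
    have hfix : ∀ l, l ≠ i → l ≠ j → s.right l = l := by
      intro l hli hlj
      by_contra hne
      obtain ⟨b, hb⟩ := key l (Pi.single 0 1)
      have := congrFun (congrFun hb l) 0
      simp [hli, hlj, Ne.symm hne] at this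
    have hone : ∀ l, l ≠ i → l ≠ j → s.left l = 1 := by
      intro l hli hlj
      apply mt_eq_one_of
      intro a
      obtain ⟨b, hb⟩ := key l a
      have := congrFun hb l
      rw [hfix l hli hlj] at this
      simp [hli, hlj] at this
      exact (sub_eq_zero.1 this.symm).symm
    have hji : s.right j = i := by
      by_contra hne
      by_cases h2 : s.right j = j
      · exact hi (s.right.injective (by rw [h2, hj]))
      · exact h2 (s.right.injective (hfix _ hne h2))
    have hinv : s.left i = (s.left j)⁻¹ := by
      rw [eq_inv_iff_mul_eq_one, mul_eq_one_iff_eq_inv, eq_comm, inv_eq_iff_mul_eq_one]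
      apply mt_eq_one_of
      intro a
      obtain ⟨b, hb⟩ := key j a
      rw [hji] at hb
      have h1 := congrFun hb i
      have h2 := congrFun hb j
      simp [hi, hi.symm] at h1 h2
      rw [h1, Matrix.mulVec_neg, neg_neg] at h2
      rw [mt_mul, ← Matrix.mulVec_mulVec, h2]
    refine ⟨i, j, s.left j, hi.symm, ?_⟩
    apply SemidirectProduct.ext
    · ext1 l
      by_cases hli : l = i
      · subst hli; rw [tS_left_i hi.symm, hinv]
      by_cases hlj : l = j
      · subst hlj; rw [tS_left_j hi.symm]
      rw [hone l hli hlj, tS_left_l hli hlj]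
    · rw [tS_right]
      ext1 l
      by_cases hli : l = i
      · subst hli; simp [hj]
      by_cases hlj : l = j
      · subst hlj; simp [hji]
      rw [hfix l hli hlj, Equiv.swap_apply_of_ne_of_ne hli hlj]

lemma tG_injOn : Set.InjOn (fun p : Fin N × Γ => (tG p.1 p.2 : WP Γ N)) {p | p.2 ≠ 1} := by
  rintro ⟨i, γ⟩ hp ⟨j, δ⟩ - h
  have h1 : (Pi.mulSingle i γ : Fin N → Γ) = Pi.mulSingle j δ :=
    congrArg SemidirectProduct.left h
  have h2 := congrFun h1 i
  by_cases hij : i = j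
  · subst hij; simpa using h2
  · simp [hij] at h2; exact absurd h2 hp

lemma tS_injOn : Set.InjOn (fun p : Fin N × Fin N × Γ => (tS p.1 p.2.1 p.2.2 : WP Γ N))
    {p | p.1 < p.2.1} := by
  rintro ⟨i, j, γ⟩ hp ⟨i', j', δ⟩ hq h
  simp only [Set.mem_ofPred_eq] at hp hq h
  have h1 := congrArg SemidirectProduct.right h
  rw [tS_right, tS_right] at h1
  have hi : i = i' ∧ j = j' := by
    have e1 := congrArg (fun e : Equiv.Perm (Fin N) => e i) h1
    have e2 := congrArg (fun e : Equiv.Perm (Fin N) => e i') h1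
    simp only [Equiv.swap_apply_left, Equiv.swap_apply_def] at e1 e2
    split_ifs at e1 e2 <;> omega
  obtain ⟨rfl, rfl⟩ := hi
  have h3 := congrFun (congrArg SemidirectProduct.left h) j
  rw [tS_left_j hp.ne, tS_left_j hp.ne] at h3
  subst h3; rfl

section
variable [Fintype Γ]

lemma sum_half {M : Type*} [AddCommMonoid M] (G : Fin N × Fin N × Γ → M) :
    ∑ p ∈ Finset.univ.filter (fun p : Fin N × Fin N × Γ => p.1 < p.2.1),
      (G p + G (p.2.1, p.1, p.2.2⁻¹)) =
    ∑ i : Fin N, ∑ j ∈ Finset.univ.filter (fun j : Fin N => j ≠ i), ∑ γ : Γ, G (i, j, γ) := by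
  rw [Finset.sum_add_distrib]
  have h2 : ∑ p ∈ Finset.univ.filter (fun p : Fin N × Fin N × Γ => p.1 < p.2.1),
      G (p.2.1, p.1, p.2.2⁻¹) =
      ∑ p ∈ Finset.univ.filter (fun p : Fin N × Fin N × Γ => p.2.1 < p.1), G p := by
    refine Finset.sum_nbij' (fun p => (p.2.1, p.1, p.2.2⁻¹)) (fun p => (p.2.1, p.1, p.2.2⁻¹))
      ?_ ?_ ?_ ?_ ?_
    · intro p hp; simpa using hp
    · intro p hp; simpa using hp
    · intro p _; simp
    · intro p _; simp
    · intro p _; rfl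
  rw [h2]
  simp only [Finset.sum_filter, Fintype.sum_prod_type]
  simp only [← Finset.sum_add_distrib]
  refine Finset.sum_congr rfl fun i _ => Finset.sum_congr rfl fun j _ => ?_
  rcases lt_trichotomy i j with h | h | h
  · simp [h, h.not_gt, h.ne']
  · simp [h]
  · simp [h, h.not_gt, h.ne]

lemma finsum_SRefl [DecidableEq Γ] {M : Type*} [AddCommMonoid M] (F : WP Γ N → M) :
    ∑ᶠ s ∈ SRefl Γ N, F s =
      (∑ p ∈ Finset.univ.filter (fun p : Fin N × Γ => p.2 ≠ 1), F (tG p.1 p.2)) +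
      ∑ p ∈ Finset.univ.filter (fun p : Fin N × Fin N × Γ => p.1 < p.2.1),
        F (tS p.1 p.2.1 p.2.2) := by
  classical
  set FG := (Finset.univ.filter (fun p : Fin N × Γ => p.2 ≠ 1)).image
    (fun p => (tG p.1 p.2 : WP Γ N)) with hFG
  set FS := (Finset.univ.filter (fun p : Fin N × Fin N × Γ => p.1 < p.2.1)).image
    (fun p => (tS p.1 p.2.1 p.2.2 : WP Γ N)) with hFS
  have hS : SRefl Γ N = ↑(FG ∪ FS) := by
    ext s
    rw [mem_SRefl, Finset.mem_coe, Finset.mem_union, hFG, hFS, Finset.mem_image, Finset.mem_image]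
    apply or_congr
    · constructor
      · rintro ⟨i, γ, h, rfl⟩
        exact ⟨(i, γ), by simpa using h, rfl⟩
      · rintro ⟨⟨i, γ⟩, h, rfl⟩
        exact ⟨i, γ, by simpa using h, rfl⟩
    · constructor
      · rintro ⟨i, j, γ, h, rfl⟩
        rcases lt_or_gt_of_ne h with h' | h'
        · exact ⟨(i, j, γ), by simpa using h', rfl⟩
        · exact ⟨(j, i, γ⁻¹), by simpa using h', tS_symm h γ⟩
      · rintro ⟨⟨i, j, γ⟩, h, rfl⟩
        exact ⟨i, j, γ, (by simpa using h : i < j).ne, rfl⟩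
  have hdis : Disjoint FG FS := by
    rw [Finset.disjoint_left]
    intro s h1 h2
    rw [hFG, Finset.mem_image] at h1
    rw [hFS, Finset.mem_image] at h2
    obtain ⟨⟨i, γ⟩, -, rfl⟩ := h1
    obtain ⟨⟨i', j', δ⟩, h, h3⟩ := h2
    have h4 := congrArg SemidirectProduct.right h3
    rw [tS_right, tG_right] at h4
    have h5 : i' < j' := by simpa using h
    have h6 := congrArg (fun e : Equiv.Perm (Fin N) => e i') h4
    simp at h6
    exact h5.ne' h6
  rw [hS, finsum_mem_coe_finset, Finset.sum_union hdis, hFG, hFS, Finset.sum_image, Finset.sum_image]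
  · intro p hp q hq h
    exact tS_injOn (by simpa using hp) (by simpa using hq) h
  · intro p hp q hq h
    exact tG_injOn (by simpa using hp) (by simpa using hq) h

variable [DecidableEq Γ]

def R1 (k : ℂ) (c : Γ → ℂ) (i : Fin N) : Smash Γ N :=
  sX Γ N i 0 * sX Γ N i 1 - sX Γ N i 1 * sX Γ N i 0
            - (1 + (k / 2) • ∑ j ∈ Finset.univ.filter (fun j : Fin N => j ≠ i),
                  ∑ γ : Γ, sG Γ N (tS i j γ)
                + ∑ γ ∈ Finset.univ.filter (fun γ : Γ => γ ≠ 1), c γ • sG Γ N (tG i γ))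

def R2 (k : ℂ) (i j : Fin N) (u v : Fin 2 → ℂ) : Smash Γ N :=
  sV Γ N (Pi.single i u) * sV Γ N (Pi.single j v)
            - sV Γ N (Pi.single j v) * sV Γ N (Pi.single i u)
            + (k / 2) • ∑ γ : Γ,
                omL (Matrix.mulVec ((γ : SL2) : Matrix (Fin 2) (Fin 2) ℂ) u) v •
                  sG Γ N (tS i j γ)

lemma smash_sub_smul (a b : ℂ) (x : Smash Γ N) : (a - b) • x = a • x - b • x := sub_smul a b x
lemma smash_smul_sub (a : ℂ) (x y : Smash Γ N) : a • (x - y) = a • x - a • y := smul_sub a x y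

lemma kappa_eq (k : ℂ) (c : Γ → ℂ) (f : WP Γ N → ℂ)
    (hf1 : ∀ (i j : Fin N) (γ : Γ), i ≠ j → f (tS i j γ) = k)
    (hf2 : ∀ (i : Fin N) (γ : Γ), γ ≠ 1 → f (tG i γ) = c γ) (u v : Fin N → Fin 2 → ℂ) :
    kappa Γ N f u v = ∑ i : Fin N, (omL (u i) (v i) • (1 + (k / 2) •
        ∑ j ∈ Finset.univ.filter (fun j : Fin N => j ≠ i), ∑ γ : Γ, sG Γ N (tS i j γ)
                + ∑ γ ∈ Finset.univ.filter (fun γ : Γ => γ ≠ 1), c γ • sG Γ N (tG i γ))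
        - ∑ j ∈ Finset.univ.filter (fun j : Fin N => j ≠ i), (k / 2) • ∑ γ : Γ,
                omL (mxx γ *ᵥ u i) (v j) • sG Γ N (tS i j γ)) := by
  rw [kappa, finsum_SRefl]
  have hS : ∑ p ∈ Finset.univ.filter (fun p : Fin N × Fin N × Γ => p.1 < p.2.1),
        (f (tS p.1 p.2.1 p.2.2) * omS Γ N (tS p.1 p.2.1 p.2.2) u v) •
          sG Γ N (tS p.1 p.2.1 p.2.2) =
      ∑ i : Fin N, ∑ j ∈ Finset.univ.filter (fun j : Fin N => j ≠ i), ∑ γ : Γ,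
        ((k / 2) * (omL (u i) (v i) - omL (mxx γ *ᵥ u i) (v j))) • sG Γ N (tS i j γ) := by
    rw [← sum_half (fun p : Fin N × Fin N × Γ =>
      ((k / 2) * (omL (u p.1) (v p.1) - omL (mxx p.2.2 *ᵥ u p.1) (v p.2.1))) •
        sG Γ N (tS p.1 p.2.1 p.2.2))]
    refine Finset.sum_congr rfl ?_
    rintro ⟨i, j, γ⟩ hp
    have hij : i ≠ j := (by simpa using hp : i < j).ne
    simp only
    rw [tS_symm hij, hf1 _ _ _ hij, omS_tS hij, ← add_smul]
    congr 1
    ring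
  have hG : ∑ p ∈ Finset.univ.filter (fun p : Fin N × Γ => p.2 ≠ 1),
        (f (tG p.1 p.2) * omS Γ N (tG p.1 p.2) u v) • sG Γ N (tG p.1 p.2) =
      ∑ i : Fin N, ∑ γ ∈ Finset.univ.filter (fun γ : Γ => γ ≠ 1),
        (omL (u i) (v i)) • c γ • sG Γ N (tG i γ) := by
    simp only [Finset.sum_filter, Fintype.sum_prod_type]
    refine Finset.sum_congr rfl fun i _ => Finset.sum_congr rfl fun γ _ => ?_
    split_ifs with h
    · rw [hf2 _ _ h, omS_tG _ _ h, smul_smul, mul_comm]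
    · rfl
  rw [hS, hG, omV, Finset.sum_smul, ← Finset.sum_add_distrib, ← Finset.sum_add_distrib]
  refine Finset.sum_congr rfl fun i _ => ?_
  simp only [mul_sub, smash_sub_smul, Finset.sum_sub_distrib, smul_add, Finset.smul_sum, smul_smul]
  simp only [mul_comm (omL (u i) (v i)) (k / 2)]
  abel

lemma sV_single (i : Fin N) (a : Fin 2 → ℂ) :
    sV Γ N (Pi.single i a) = a 0 • sX Γ N i 0 + a 1 • sX Γ N i 1 := by
  rw [sV, nV, Finset.sum_eq_single i]
  · simp [Fin.sum_univ_two, sX]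
  · intro j _ hj; simp [hj]
  · simp

lemma sV_sum (u : Fin N → Fin 2 → ℂ) : sV Γ N u = ∑ i, sV Γ N (Pi.single i (u i)) := by
  simp only [sV_single]
  rw [sV, nV]
  simp [Fin.sum_univ_two, sX]

lemma relator_eq (k : ℂ) (c : Γ → ℂ) (f : WP Γ N → ℂ)
    (hf1 : ∀ (i j : Fin N) (γ : Γ), i ≠ j → f (tS i j γ) = k)
    (hf2 : ∀ (i : Fin N) (γ : Γ), γ ≠ 1 → f (tG i γ) = c γ) (u v : Fin N → Fin 2 → ℂ) :
    sV Γ N u * sV Γ N v - sV Γ N v * sV Γ N u - kappa Γ N f u v =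
    ∑ i : Fin N, (omL (u i) (v i) • R1 k c i +
      ∑ j ∈ Finset.univ.filter (fun j : Fin N => j ≠ i), R2 k i j (u i) (v j)) := by
  have h1 : sV Γ N u * sV Γ N v - sV Γ N v * sV Γ N u = ∑ i, ∑ j,
      (sV Γ N (Pi.single i (u i)) * sV Γ N (Pi.single j (v j))
        - sV Γ N (Pi.single j (v j)) * sV Γ N (Pi.single i (u i))) := by
    rw [sV_sum u, sV_sum v]
    simp only [Finset.sum_sub_distrib, Finset.sum_mul_sum]
    congr 1
    rw [Finset.sum_comm]
  rw [h1, kappa_eq k c f hf1 hf2, ← Finset.sum_sub_distrib]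
  refine Finset.sum_congr rfl fun i _ => ?_
  have h2 : (sV Γ N (Pi.single i (u i)) * sV Γ N (Pi.single i (v i))
        - sV Γ N (Pi.single i (v i)) * sV Γ N (Pi.single i (u i))) =
      omL (u i) (v i) • (sX Γ N i 0 * sX Γ N i 1 - sX Γ N i 1 * sX Γ N i 0) := by
    simp only [sV_single, add_mul, mul_add, smul_mul_assoc, mul_smul_comm, smul_smul, omL]
    module
  have h3 : Finset.univ.filter (fun j : Fin N => j ≠ i) = Finset.univ.erase i := by
    ext j; simp
  rw [← Finset.add_sum_erase Finset.univ _ (Finset.mem_univ i), h2, ← h3]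
  simp only [R1, R2, Finset.sum_add_distrib]
  simp only [smash_smul_sub]
  abel

lemma R2_zero_left (k : ℂ) (i j : Fin N) (v : Fin 2 → ℂ) : (R2 k i j 0 v : Smash Γ N) = 0 := by
  simp [R2, omL_zero_left, sV, nV]
lemma R2_zero_right (k : ℂ) (i j : Fin N) (v : Fin 2 → ℂ) : (R2 k i j v 0 : Smash Γ N) = 0 := by
  simp [R2, omL_zero_right, sV, nV]

lemma tsi_sum_mem {R ι : Type*} [Ring R] (I : TwoSidedIdeal R) (s : Finset ι) (g : ι → R)
    (h : ∀ i ∈ s, g i ∈ I) : ∑ i ∈ s, g i ∈ I := by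
  classical
  induction s using Finset.induction_on with
  | empty => simp
  | insert a s ha ih =>
    rw [Finset.sum_insert ha]
    exact I.add_mem (h a (by simp)) (ih fun i hi => h i (by simp [hi]))

end

end helpers

/-- in the smash product `Γ_N ♯ TV`, the two-sided ideal generated by the
elements `[u,v] - κ(u,v)`, `u, v ∈ V`, where
`κ(u,v) = ω_V(u,v)·1 + ∑_{s∈𝒮} f_s ω_s(u,v)·s` and `f` is the class function with value
`k` on the reflections `s_{ij}γ_iγ_j⁻¹` of type (S) and value `c_γ` on the reflections
`γ_i` of type (Γ), coincides with the two-sided ideal generated by the relators of (R1)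
and (R2); in particular the two presentations define the same algebra `H_{1,k,c}(Γ_N)`. -/
theorem stmt_2 (Γ : Subgroup SL2) [Fintype Γ] [DecidableEq Γ] (N : ℕ)
    (k : ℂ) (c : Γ → ℂ) (hc : ∀ γ δ : Γ, c (δ * γ * δ⁻¹) = c γ)
    (f : WP Γ N → ℂ)
    (hf1 : ∀ (i j : Fin N) (γ : Γ), i ≠ j → f (tS i j γ) = k)
    (hf2 : ∀ (i : Fin N) (γ : Γ), γ ≠ 1 → f (tG i γ) = c γ) :
    TwoSidedIdeal.span
      {z : Smash Γ N | ∃ u v : Fin N → Fin 2 → ℂ,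
        z = sV Γ N u * sV Γ N v - sV Γ N v * sV Γ N u - kappa Γ N f u v} =
    TwoSidedIdeal.span
      ({z : Smash Γ N | ∃ i : Fin N,
          z = sX Γ N i 0 * sX Γ N i 1 - sX Γ N i 1 * sX Γ N i 0
            - (1 + (k / 2) • ∑ j ∈ Finset.univ.filter (fun j : Fin N => j ≠ i),
                  ∑ γ : Γ, sG Γ N (tS i j γ)
                + ∑ γ ∈ Finset.univ.filter (fun γ : Γ => γ ≠ 1), c γ • sG Γ N (tG i γ))} ∪
       {z : Smash Γ N | ∃ (i j : Fin N) (u v : Fin 2 → ℂ), i ≠ j ∧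
          z = sV Γ N (Pi.single i u) * sV Γ N (Pi.single j v)
            - sV Γ N (Pi.single j v) * sV Γ N (Pi.single i u)
            + (k / 2) • ∑ γ : Γ,
                omL (Matrix.mulVec ((γ : SL2) : Matrix (Fin 2) (Fin 2) ℂ) u) v •
                  sG Γ N (tS i j γ)}) := by
  have key := relator_eq k c f hf1 hf2
  apply le_antisymm
  · rw [TwoSidedIdeal.span_le]
    rintro z ⟨u, v, rfl⟩
    rw [key]
    apply tsi_sum_mem
    intro i _
    apply TwoSidedIdeal.add_mem
    · rw [Algebra.smul_def]
      apply TwoSidedIdeal.mul_mem_left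
      apply TwoSidedIdeal.subset_span
      exact Or.inl ⟨i, rfl⟩
    · apply tsi_sum_mem
      intro j hj
      apply TwoSidedIdeal.subset_span
      exact Or.inr ⟨i, j, u i, v j, (by simpa using hj : j ≠ i).symm, rfl⟩
  · rw [TwoSidedIdeal.span_le]
    rintro z (⟨i, rfl⟩ | ⟨i, j, u, v, hij, rfl⟩)
    · apply TwoSidedIdeal.subset_span
      refine ⟨Pi.single i (Pi.single 0 1), Pi.single i (Pi.single 1 1), ?_⟩
      rw [key]
      change R1 k c i = _
      rw [Finset.sum_eq_single i, Finset.sum_eq_zero]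
      · simp [omL]
      · intro j hj
        have hji : j ≠ i := by simpa using hj
        rw [Pi.single_eq_of_ne hji, R2_zero_right]
      · intro l _ hl
        rw [Pi.single_eq_of_ne hl, omL_zero_left, zero_smul, zero_add]
        exact Finset.sum_eq_zero fun j _ => R2_zero_left _ _ _ _
      · simp
    · apply TwoSidedIdeal.subset_span
      refine ⟨Pi.single i u, Pi.single j v, ?_⟩
      rw [key]
      change R2 k i j u v = _
      rw [Finset.sum_eq_single i, Finset.sum_eq_single j]
      · simp [hij, omL_zero_right]
      · intro l _ hl
        rw [Pi.single_eq_of_ne hl, R2_zero_right]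
      · intro h; exact absurd hij.symm (by simpa using h)
      · intro l _ hl
        rw [Pi.single_eq_of_ne hl, omL_zero_left, zero_smul, zero_add]
        exact Finset.sum_eq_zero fun j _ => R2_zero_left _ _ _ _
      · simp
end
end

section
/- (PBW property) The elements g · x_1^{a_1} y_1^{b_1} x_2^{a_2} y_2^{b_2} ⋯ x_N^{a_N} y_N^{b_N}, where g ranges over Γ_N and a_i, b_i over nonnegative integers, form a basis of H_{1,k,c}(Γ_N) as a ℂ-vector space. Equivalently, the linear map ℂ[Γ_N] ⊗ ℂ[x_1,y_1,…,x_N,y_N] → H_{1,k,c}(Γ_N) sending g ⊗ (monomial) to the product g·(monomial in the fixed order above) is a linear isomorphism. -/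
noncomputable section

noncomputable section

variable (Γ : Subgroup SL2) [Fintype Γ] [DecidableEq Γ] (N : ℕ)

/-- The defining relations of the wreath product symplectic reflection algebra
`H_{1,k,c}(Γ_N)`:  the group relations of `Γ_N`, the relations `g v g⁻¹ = g(v)` for
`v ∈ V`, and the relations (R1), (R2) of Gan–Ginzburg. -/
inductive HRel (k : ℂ) (c : Γ → ℂ) :
    FreeAlgebra ℂ (WP Γ N ⊕ Fin N × Fin 2) → FreeAlgebra ℂ (WP Γ N ⊕ Fin N × Fin 2) → Prop
  | grp_mul (g h : WP Γ N) : HRel k c (nG Γ N g * nG Γ N h) (nG Γ N (g * h))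
  | grp_one : HRel k c (nG Γ N 1) 1
  | grp_conj (g : WP Γ N) (v : Fin N → Fin 2 → ℂ) :
      HRel k c (nG Γ N g * nV Γ N v * nG Γ N g⁻¹) (nV Γ N (actL Γ N g v))
  | r1 (i : Fin N) :
      HRel k c (nX Γ N i 0 * nX Γ N i 1 - nX Γ N i 1 * nX Γ N i 0)
        (1 + (k / 2) • ∑ j ∈ Finset.univ.filter (fun j : Fin N => j ≠ i),
            ∑ γ : Γ, nG Γ N (tS i j γ)
          + ∑ γ ∈ Finset.univ.filter (fun γ : Γ => γ ≠ 1), c γ • nG Γ N (tG i γ))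
  | r2 (i j : Fin N) (hij : i ≠ j) (u v : Fin 2 → ℂ) :
      HRel k c (nV Γ N (Pi.single i u) * nV Γ N (Pi.single j v)
          - nV Γ N (Pi.single j v) * nV Γ N (Pi.single i u))
        ((-(k / 2)) • ∑ γ : Γ,
          omL (Matrix.mulVec ((γ : SL2) : Matrix (Fin 2) (Fin 2) ℂ) u) v • nG Γ N (tS i j γ))

/-- The wreath product symplectic reflection algebra `H_{1,k,c}(Γ_N)`. -/
abbrev HN (k : ℂ) (c : Γ → ℂ) : Type := RingQuot (HRel Γ N k c)

/-- The image of the group element `g ∈ Γ_N` in `H_{1,k,c}(Γ_N)`. -/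
def hG (k : ℂ) (c : Γ → ℂ) (g : WP Γ N) : HN Γ N k c :=
  RingQuot.mkAlgHom ℂ (HRel Γ N k c) (nG Γ N g)

/-- The image of `x_i` (`p = 0`) resp. `y_i` (`p = 1`) in `H_{1,k,c}(Γ_N)`. -/
def hX (k : ℂ) (c : Γ → ℂ) (i : Fin N) (p : Fin 2) : HN Γ N k c :=
  RingQuot.mkAlgHom ℂ (HRel Γ N k c) (nX Γ N i p)

end

noncomputable section

/-- The PBW monomial `g · x₁^{a₁} y₁^{b₁} ⋯ x_N^{a_N} y_N^{b_N}` in `H_{1,k,c}(Γ_N)`,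
indexed by `g ∈ Γ_N` and the exponent function `e : Fin N × Fin 2 → ℕ`
(`e (i, 0) = a_i`, `e (i, 1) = b_i`). -/
def pbwMono (Γ : Subgroup SL2) [Fintype Γ] [DecidableEq Γ] (N : ℕ) (k : ℂ) (c : Γ → ℂ)
    (g : WP Γ N) (e : Fin N × Fin 2 → ℕ) : HN Γ N k c :=
  hG Γ N k c g *
    ((List.finRange N).map fun i => hX Γ N k c i 0 ^ e (i, 0) * hX Γ N k c i 1 ^ e (i, 1)).prod

end



namespace PBWaux

/-- Abstract symplectic-reflection-type data. -/
structure SRD (ι G V X : Type) [LinearOrder ι] [Group G] [AddCommGroup V] [Module ℂ V]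
    [Fintype X] where
  b : Module.Basis ι ℂ V
  act : G → V →ₗ[ℂ] V
  s : X → G
  B : X → V →ₗ[ℂ] V →ₗ[ℂ] ℂ
  act_mul : ∀ g h v, act (g * h) v = act g (act h v)
  act_one : ∀ v, act 1 v = v
  anti : ∀ r u v, B r u v = - B r v u
  jac : ∀ r u v w, B r u v • (w - act (s r) w) + B r v w • (u - act (s r) u)
    + B r w u • (v - act (s r) v) = 0
  equ : ∀ g, ∃ e : Equiv.Perm X, ∀ r, s (e r) = g * s r * g⁻¹ ∧
    ∀ u v, B (e r) (act g u) (act g v) = B r u v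

/-- The underlying space. -/
abbrev MM (ι G : Type) : Type := (Multiset ι × G) →₀ ℂ

/-- Basis vectors. -/
def zz {ι G : Type} (m : Multiset ι) (h : G) : MM ι G := Finsupp.single (m, h) 1

/-- Multiplication by a variable. -/
def Zs {ι G : Type} (i : ι) : MM ι G →ₗ[ℂ] MM ι G :=
  Finsupp.lmapDomain ℂ ℂ (fun p => (i ::ₘ p.1, p.2))

/-- Filtration by degree. -/
def DD (ι G : Type) (n : ℕ) : Submodule ℂ (MM ι G) :=
  Finsupp.supported ℂ ℂ {p | p.1.card < n}

theorem Zs_zz {ι G : Type} (i : ι) (m : Multiset ι) (h : G) :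
    Zs i (zz m h) = zz (i ::ₘ m) h := by
  simp [Zs, zz]

theorem zz_mem {ι G : Type} {n : ℕ} (m : Multiset ι) (h : G) (hm : m.card < n) :
    zz m h ∈ DD ι G n := by
  rw [DD, Finsupp.supported_eq_span_single]
  exact Submodule.subset_span ⟨(m, h), hm, rfl⟩

theorem DD_eq {ι G W : Type} [AddCommGroup W] [Module ℂ W] {n : ℕ} {f g : MM ι G →ₗ[ℂ] W}
    (H : ∀ m h, m.card < n → f (zz m h) = g (zz m h)) :
    ∀ x ∈ DD ι G n, f x = g x := by
  intro x hx
  rw [DD, Finsupp.supported_eq_span_single] at hx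
  refine LinearMap.eqOn_span (s := _) ?_ hx
  rintro _ ⟨⟨m, h⟩, hm, rfl⟩
  exact H m h hm

theorem DD_map {ι G : Type} {n k : ℕ} {f : MM ι G →ₗ[ℂ] MM ι G}
    (H : ∀ m h, m.card < n → f (zz m h) ∈ DD ι G k) :
    ∀ x ∈ DD ι G n, f x ∈ DD ι G k := by
  intro x hx
  rw [DD, Finsupp.supported_eq_span_single] at hx
  have : Submodule.span ℂ ((fun i => Finsupp.single i (1:ℂ)) '' {p : Multiset ι × G | p.1.card < n})
      ≤ (DD ι G k).comap f := by
    rw [Submodule.span_le]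
    rintro _ ⟨⟨m, h⟩, hm, rfl⟩
    exact H m h hm
  exact this hx

theorem DD_mono {ι G : Type} {n k : ℕ} (h : n ≤ k) : DD ι G n ≤ DD ι G k :=
  Finsupp.supported_mono (fun _ hp => lt_of_lt_of_le hp h)

theorem DD_all {ι G : Type} (x : MM ι G) : ∃ n, x ∈ DD ι G n := by
  refine ⟨x.support.sup (fun p => p.1.card) + 1, ?_⟩
  rw [DD, Finsupp.mem_supported]
  intro p hp
  exact Nat.lt_succ_of_le (Finset.le_sup (f := fun p : Multiset ι × G => p.1.card) hp)

theorem Zs_DD {ι G : Type} {n : ℕ} (i : ι) : ∀ x ∈ DD ι G n, Zs i x ∈ DD ι G (n + 1) :=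
  DD_map fun m h hm => by
    rw [Zs_zz]; exact zz_mem _ _ (by simpa using hm)

theorem zz_ext {ι G W : Type} [AddCommGroup W] [Module ℂ W] {f g : MM ι G →ₗ[ℂ] W}
    (H : ∀ m h, f (zz m h) = g (zz m h)) : f = g := by
  ext ⟨m, h⟩
  exact H m h

variable {ι G V X : Type} [LinearOrder ι] [Group G] [AddCommGroup V] [Module ℂ V]
    [Fintype X] (S : SRD ι G V X)

/-- A stage of the approximation of the operators. -/
abbrev Stg (ι G : Type) : Type := (ι → MM ι G →ₗ[ℂ] MM ι G) × (G → MM ι G →ₗ[ℂ] MM ι G)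

/-- Extended operators. -/
def ext (S : SRD ι G V X) (t : ι → MM ι G →ₗ[ℂ] MM ι G) : V →ₗ[ℂ] (MM ι G →ₗ[ℂ] MM ι G) :=
  S.b.constr ℂ (fun i => Zs i + t i)

theorem ext_b (t : ι → MM ι G →ₗ[ℂ] MM ι G) (i : ι) : ext S t (S.b i) = Zs i + t i := by
  simp [ext, Module.Basis.constr_basis]

/-- Curvature operator. -/
def KK {W : Type} [AddCommGroup W] [Module ℂ W] (S : SRD ι G V X) (p : G → W →ₗ[ℂ] W) (u v : V) :
    W →ₗ[ℂ] W := ∑ r, S.B r u v • p (S.s r)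

/-- one step -/
def tstep (S : SRD ι G V X) (st : Stg ι G) (i : ι) (h : G) : List ι → MM ι G
  | [] => 0
  | j :: t => if i ≤ j then 0 else
      ext S st.1 (S.b j) (st.1 i (zz t h)) + KK S st.2 (S.b i) (S.b j) (zz t h)

/-- one step -/
def pstep (S : SRD ι G V X) (st : Stg ι G) (g : G) (h : G) : List ι → MM ι G
  | [] => zz 0 (g * h)
  | j :: t => ext S st.1 (S.act g (S.b j)) (st.2 g (zz t h))

/-- next stage -/
def nxt (S : SRD ι G V X) (st : Stg ι G) : Stg ι G :=
  (fun i => Finsupp.linearCombination ℂ (fun p : Multiset ι × G => tstep S st i p.2 (p.1.sort (· ≤ ·))),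
   fun g => Finsupp.linearCombination ℂ (fun p : Multiset ι × G => pstep S st g p.2 (p.1.sort (· ≤ ·))))

/-- stages -/
def stage (S : SRD ι G V X) : ℕ → Stg ι G
  | 0 => (0, 0)
  | n + 1 => nxt S (stage S n)

theorem min_ind {P : Multiset ι → Prop} (h0 : P 0)
    (h1 : ∀ j m, (∀ a ∈ m, j ≤ a) → P (j ::ₘ m)) : ∀ m, P m := by
  intro m
  rcases hm : m.sort (· ≤ ·) with _ | ⟨j, t⟩
  · have := Multiset.sort_eq m (· ≤ ·)
    rw [hm] at this
    rw [← this]; exact h0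
  · have h2 := Multiset.sort_eq m (· ≤ ·)
    have h3 := Multiset.pairwise_sort m (· ≤ ·)
    rw [hm] at h2 h3
    rw [← h2, ← Multiset.cons_coe]
    apply h1
    intro a ha
    exact (List.pairwise_cons.1 h3).1 a (by simpa using ha)

theorem nxt_t_zero (st : Stg ι G) (i : ι) (h : G) : (nxt S st).1 i (zz 0 h) = 0 := by
  simp [nxt, zz, tstep]

theorem nxt_t_cons (st : Stg ι G) (i j : ι) (m : Multiset ι) (hm : ∀ a ∈ m, j ≤ a) (h : G) :
    (nxt S st).1 i (zz (j ::ₘ m) h) = if i ≤ j then 0 else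
      ext S st.1 (S.b j) (st.1 i (zz m h)) + KK S st.2 (S.b i) (S.b j) (zz m h) := by
  simp [nxt, zz, Multiset.sort_cons _ _ _ hm, tstep]

theorem nxt_p_zero (st : Stg ι G) (g : G) (h : G) : (nxt S st).2 g (zz 0 h) = zz 0 (g * h) := by
  simp [nxt, zz, pstep]

theorem nxt_p_cons (st : Stg ι G) (g : G) (j : ι) (m : Multiset ι) (hm : ∀ a ∈ m, j ≤ a) (h : G) :
    (nxt S st).2 g (zz (j ::ₘ m) h) = ext S st.1 (S.act g (S.b j)) (st.2 g (zz m h)) := by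
  simp [nxt, zz, Multiset.sort_cons _ _ _ hm, pstep]

theorem ext_DD_of {t : ι → MM ι G →ₗ[ℂ] MM ι G} {n : ℕ}
    (H : ∀ i, ∀ x ∈ DD ι G n, t i x ∈ DD ι G (n+1)) (v : V) :
    ∀ x ∈ DD ι G n, ext S t v x ∈ DD ι G (n + 1) := by
  intro x hx
  rw [ext, Module.Basis.constr_apply, Finsupp.sum, LinearMap.sum_apply]
  refine Submodule.sum_mem _ fun i _ => ?_
  rw [LinearMap.smul_apply]
  exact Submodule.smul_mem _ _ (Submodule.add_mem _ (Zs_DD i x hx) (H i x hx))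

theorem ext_congr_of {t t' : ι → MM ι G →ₗ[ℂ] MM ι G} {x : MM ι G}
    (H : ∀ i, t i x = t' i x) (v : V) : ext S t v x = ext S t' v x := by
  simp only [ext, Module.Basis.constr_apply, Finsupp.sum, LinearMap.sum_apply,
    LinearMap.smul_apply, LinearMap.add_apply, H]

theorem stage_DD (n : ℕ) : (∀ q i, ∀ x ∈ DD ι G (q + 1), (stage S n).1 i x ∈ DD ι G q) ∧
    (∀ q g, ∀ x ∈ DD ι G q, (stage S n).2 g x ∈ DD ι G q) := by
  induction n with
  | zero => simp [stage]
  | succ n ih =>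
    obtain ⟨iht, ihp⟩ := ih
    have hext : ∀ q v, ∀ x ∈ DD ι G q, ext S (stage S n).1 v x ∈ DD ι G (q+1) := by
      intro q v
      apply ext_DD_of
      intro i x hx
      exact DD_mono (by omega) (iht q i x (DD_mono (by omega) hx))
    have hK : ∀ q u v, ∀ x ∈ DD ι G q, KK S (stage S n).2 u v x ∈ DD ι G q := by
      intro q u v x hx
      rw [KK, LinearMap.sum_apply]
      refine Submodule.sum_mem _ fun i _ => ?_
      rw [LinearMap.smul_apply]
      exact Submodule.smul_mem _ _ (ihp _ _ _ hx)
    constructor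
    · intro q i
      apply DD_map
      intro m
      induction m using min_ind with
      | h0 => intro h _; rw [stage, nxt_t_zero]; exact Submodule.zero_mem _
      | h1 j m hj =>
        intro h hm
        rw [stage, nxt_t_cons _ _ _ _ _ hj]
        rw [Multiset.card_cons] at hm
        split_ifs
        · exact Submodule.zero_mem _
        obtain ⟨q, rfl⟩ : ∃ q', q = q' + 1 := ⟨q - 1, by omega⟩
        have hz : (zz m h) ∈ DD ι G (q + 1) := zz_mem _ _ (by omega)
        exact Submodule.add_mem _ (hext _ _ _ (iht _ _ _ hz)) (hK _ _ _ _ hz)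
    · intro q g
      apply DD_map
      intro m
      induction m using min_ind with
      | h0 => intro h hm; rw [stage, nxt_p_zero]; exact zz_mem _ _ hm
      | h1 j m hj =>
        intro h hm
        rw [stage, nxt_p_cons _ _ _ _ _ hj]
        rw [Multiset.card_cons] at hm
        obtain ⟨q, rfl⟩ : ∃ q', q = q' + 1 := ⟨q - 1, by omega⟩
        have hz : (zz m h) ∈ DD ι G q := zz_mem _ _ (by omega)
        exact hext _ _ _ (ihp _ _ _ hz)

theorem KK_congr_of {W : Type} [AddCommGroup W] [Module ℂ W] {p p' : G → W →ₗ[ℂ] W} {x : W}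
    (H : ∀ g, p g x = p' g x) (u v : V) : KK S p u v x = KK S p' u v x := by
  simp only [KK, LinearMap.sum_apply, LinearMap.smul_apply, H]

theorem stage_succ (n : ℕ) :
    (∀ i, ∀ x ∈ DD ι G n, (stage S (n+1)).1 i x = (stage S n).1 i x) ∧
    (∀ g, ∀ x ∈ DD ι G n, (stage S (n+1)).2 g x = (stage S n).2 g x) := by
  induction n with
  | zero =>
    constructor <;> intro i <;> apply DD_eq <;> intro m h hm <;> omega
  | succ n ih =>
    obtain ⟨iht, ihp⟩ := ih
    constructor
    · intro i
      apply DD_eq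
      intro m
      induction m using min_ind with
      | h0 => intro h _; rw [stage, nxt_t_zero, stage, nxt_t_zero]
      | h1 j m hj =>
        intro h hm
        rw [stage, nxt_t_cons _ _ _ _ _ hj, stage, nxt_t_cons _ _ _ _ _ hj, ← stage]
        rw [Multiset.card_cons] at hm
        have hz : (zz m h) ∈ DD ι G n := zz_mem _ _ (by omega)
        rw [iht i _ hz, KK_congr_of S (fun g => ihp g _ hz), 
          ext_congr_of S (fun i' => iht i' _ _)]
        exact fun _ => (stage_DD S n).1 n i _ (DD_mono (by omega) hz)
    · intro i
      apply DD_eq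
      intro m
      induction m using min_ind with
      | h0 => intro h _; rw [stage, nxt_p_zero, stage, nxt_p_zero]
      | h1 j m hj =>
        intro h hm
        rw [stage, nxt_p_cons _ _ _ _ _ hj, stage, nxt_p_cons _ _ _ _ _ hj, ← stage]
        rw [Multiset.card_cons] at hm
        have hz : (zz m h) ∈ DD ι G n := zz_mem _ _ (by omega)
        rw [ihp i _ hz, ext_congr_of S (fun i' => iht i' _ _)]
        exact fun _ => (stage_DD S n).2 n i _ hz

theorem stage_le {n k : ℕ} (hk : n ≤ k) :
    (∀ i, ∀ x ∈ DD ι G n, (stage S k).1 i x = (stage S n).1 i x) ∧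
    (∀ g, ∀ x ∈ DD ι G n, (stage S k).2 g x = (stage S n).2 g x) := by
  induction k, hk using Nat.le_induction with
  | base => exact ⟨fun _ _ _ => rfl, fun _ _ _ => rfl⟩
  | succ k hk ih =>
    refine ⟨fun i x hx => ?_, fun i x hx => ?_⟩
    · rw [(stage_succ S k).1 i x (DD_mono hk hx), ih.1 i x hx]
    · rw [(stage_succ S k).2 i x (DD_mono hk hx), ih.2 i x hx]

/-- The limit operators. -/
def tau (S : SRD ι G V X) (i : ι) : MM ι G →ₗ[ℂ] MM ι G :=
  Finsupp.linearCombination ℂ (fun p : Multiset ι × G => (stage S (p.1.card + 1)).1 i (zz p.1 p.2))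

/-- The limit operators. -/
def pp (S : SRD ι G V X) (g : G) : MM ι G →ₗ[ℂ] MM ι G :=
  Finsupp.linearCombination ℂ (fun p : Multiset ι × G => (stage S (p.1.card + 1)).2 g (zz p.1 p.2))

/-- The limit operators. -/
def rr (S : SRD ι G V X) : V →ₗ[ℂ] (MM ι G →ₗ[ℂ] MM ι G) := ext S (tau S)

theorem tau_zz (i : ι) (m : Multiset ι) (h : G) :
    tau S i (zz m h) = (stage S (m.card + 1)).1 i (zz m h) := by
  simp [tau, zz]

theorem pp_zz (g : G) (m : Multiset ι) (h : G) :
    pp S g (zz m h) = (stage S (m.card + 1)).2 g (zz m h) := by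
  simp [pp, zz]

theorem tau_stage (n : ℕ) (i : ι) : ∀ x ∈ DD ι G n, tau S i x = (stage S n).1 i x :=
  DD_eq fun m h hm => by
    rw [tau_zz, (stage_le S (show m.card + 1 ≤ n by omega)).1]
    exact zz_mem _ _ (by omega)

theorem pp_stage (n : ℕ) (g : G) : ∀ x ∈ DD ι G n, pp S g x = (stage S n).2 g x :=
  DD_eq fun m h hm => by
    rw [pp_zz, (stage_le S (show m.card + 1 ≤ n by omega)).2]
    exact zz_mem _ _ (by omega)

theorem tau_DD (n : ℕ) (i : ι) : ∀ x ∈ DD ι G (n+1), tau S i x ∈ DD ι G n := by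
  intro x hx
  rw [tau_stage S _ i x hx]
  exact (stage_DD S _).1 n i x hx

theorem pp_DD (n : ℕ) (g : G) : ∀ x ∈ DD ι G n, pp S g x ∈ DD ι G n := by
  intro x hx
  rw [pp_stage S _ g x hx]
  exact (stage_DD S _).2 n g x hx

theorem rr_DD (n : ℕ) (v : V) : ∀ x ∈ DD ι G n, rr S v x ∈ DD ι G (n+1) :=
  ext_DD_of S (fun i x hx => DD_mono (by omega) (tau_DD S n i x (DD_mono (by omega) hx))) v

theorem rr_b (i : ι) (x : MM ι G) : rr S (S.b i) x = Zs i x + tau S i x := by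
  rw [rr, ext_b]; rfl

theorem tau_zero (i : ι) (h : G) : tau S i (zz 0 h) = 0 := by
  rw [tau_zz, stage, nxt_t_zero]

theorem tau_cons (i j : ι) (m : Multiset ι) (hm : ∀ a ∈ m, j ≤ a) (h : G) :
    tau S i (zz (j ::ₘ m) h) = if i ≤ j then 0 else
      rr S (S.b j) (tau S i (zz m h)) + KK S (pp S) (S.b i) (S.b j) (zz m h) := by
  rw [tau_zz, stage, nxt_t_cons _ _ _ _ _ hm, Multiset.card_cons]
  have hz : zz m h ∈ DD ι G (m.card + 1) := zz_mem _ _ (by omega)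
  rw [← tau_stage S _ i _ hz, ← KK_congr_of S (fun g => pp_stage S _ g _ hz), rr,
    ← ext_congr_of S (fun i' => tau_stage S _ i' _ _)]
  exact fun _ => DD_mono (Nat.le_succ _) (tau_DD S _ i _ hz)

theorem pp_zero (g h : G) : pp S g (zz (0 : Multiset ι) h) = zz 0 (g * h) := by
  rw [pp_zz, stage, nxt_p_zero]

theorem pp_cons (g : G) (j : ι) (m : Multiset ι) (hm : ∀ a ∈ m, j ≤ a) (h : G) :
    pp S g (zz (j ::ₘ m) h) = rr S (S.act g (S.b j)) (pp S g (zz m h)) := by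
  rw [pp_zz, stage, nxt_p_cons _ _ _ _ _ hm, Multiset.card_cons]
  have hz : zz m h ∈ DD ι G (m.card + 1) := zz_mem _ _ (by omega)
  rw [← pp_stage S _ g _ hz, rr, ← ext_congr_of S (fun i' => tau_stage S _ i' _ _)]
  exact fun _ => pp_DD S _ _ _ hz

/-- `i ≤ min m` : plain product. -/
theorem rr_le (i : ι) (m : Multiset ι) (hm : ∀ a ∈ m, i ≤ a) (h : G) :
    rr S (S.b i) (zz m h) = zz (i ::ₘ m) h := by
  rw [rr_b, Zs_zz]
  have : tau S i (zz m h) = 0 := by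
    induction m using min_ind with
    | h0 => exact tau_zero S i h
    | h1 j m hj => rw [tau_cons _ _ _ _ hj, if_pos (hm j (by simp))]
  rw [this, add_zero]

/-- basic straightening -/
theorem rr_str (i j : ι) (hij : j < i) (m : Multiset ι) (hm : ∀ a ∈ m, j ≤ a) (h : G) :
    rr S (S.b i) (rr S (S.b j) (zz m h)) =
      rr S (S.b j) (rr S (S.b i) (zz m h)) + KK S (pp S) (S.b i) (S.b j) (zz m h) := by
  rw [rr_le S j m hm, rr_b, tau_cons _ _ _ _ hm, if_neg (not_le.2 hij), rr_b S i (zz m h),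
    map_add, Zs_zz, Zs_zz, rr_le, Multiset.cons_swap, add_assoc]
  intro a ha
  rcases Multiset.mem_cons.1 ha with rfl | ha
  · exact hij.le
  · exact hm a ha

theorem KK_add_left {W : Type} [AddCommGroup W] [Module ℂ W] (p : G → W →ₗ[ℂ] W) (u u' v : V) :
    KK S p (u + u') v = KK S p u v + KK S p u' v := by
  simp [KK, add_smul, Finset.sum_add_distrib]

theorem KK_add_right {W : Type} [AddCommGroup W] [Module ℂ W] (p : G → W →ₗ[ℂ] W) (u v v' : V) :
    KK S p u (v + v') = KK S p u v + KK S p u v' := by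
  simp [KK, add_smul, Finset.sum_add_distrib]

theorem KK_smul_left {W : Type} [AddCommGroup W] [Module ℂ W] (p : G → W →ₗ[ℂ] W) (a : ℂ)
    (u v : V) : KK S p (a • u) v = a • KK S p u v := by
  simp [KK, mul_smul, Finset.smul_sum]

theorem KK_smul_right {W : Type} [AddCommGroup W] [Module ℂ W] (p : G → W →ₗ[ℂ] W) (a : ℂ)
    (u v : V) : KK S p u (a • v) = a • KK S p u v := by
  simp [KK, mul_smul, Finset.smul_sum]

theorem KK_anti {W : Type} [AddCommGroup W] [Module ℂ W] (p : G → W →ₗ[ℂ] W) (u v : V) :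
    KK S p u v = - KK S p v u := by
  simp only [KK]
  rw [← Finset.sum_neg_distrib]
  refine Finset.sum_congr rfl fun r _ => ?_
  rw [S.anti, neg_smul]

theorem KK_self {W : Type} [AddCommGroup W] [Module ℂ W] (p : G → W →ₗ[ℂ] W) (u : V) :
    KK S p u u = 0 := by
  simp only [KK]
  refine Finset.sum_eq_zero fun r _ => ?_
  have := S.anti r u u
  rw [show S.B r u u = 0 from self_eq_neg.1 this, zero_smul]

/-- The commutator relation extends from basis vectors. -/
theorem C_ext {W : Type} [AddCommGroup W] [Module ℂ W] (R : V →ₗ[ℂ] (W →ₗ[ℂ] W))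
    (p : G → W →ₗ[ℂ] W) (x : W)
    (H : ∀ i j, R (S.b i) (R (S.b j) x) = R (S.b j) (R (S.b i) x) + KK S p (S.b i) (S.b j) x)
    (u v : V) : R u (R v x) = R v (R u x) + KK S p u v x := by
  let f : V →ₗ[ℂ] V →ₗ[ℂ] W := LinearMap.mk₂ ℂ (fun u v => R u (R v x))
    (by intros; simp) (by intros; simp) (by intros; simp) (by intros; simp)
  let g : V →ₗ[ℂ] V →ₗ[ℂ] W := LinearMap.mk₂ ℂ (fun u v => R v (R u x) + KK S p u v x)
    (by intros; simp [KK_add_left]; abel) (by intros; simp [KK_smul_left])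
    (by intros; simp [KK_add_right]; abel) (by intros; simp [KK_smul_right])
  have : f = g := LinearMap.ext_basis S.b S.b (fun i j => H i j)
  exact congrArg (fun F : V →ₗ[ℂ] V →ₗ[ℂ] W => F u v) this

/-- It suffices to check the commutator relation for `j < i`. -/
theorem C_lt {W : Type} [AddCommGroup W] [Module ℂ W] (R : V →ₗ[ℂ] (W →ₗ[ℂ] W))
    (p : G → W →ₗ[ℂ] W) (x : W)
    (H : ∀ i j, j < i →
      R (S.b i) (R (S.b j) x) = R (S.b j) (R (S.b i) x) + KK S p (S.b i) (S.b j) x)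
    (u v : V) : R u (R v x) = R v (R u x) + KK S p u v x := by
  refine C_ext S R p x (fun i j => ?_) u v
  rcases lt_trichotomy j i with h | rfl | h
  · exact H i j h
  · simp [KK_self]
  · rw [H j i h, KK_anti S p (S.b i)]; simp

theorem jac_op {W : Type} [AddCommGroup W] [Module ℂ W] (R : V →ₗ[ℂ] (W →ₗ[ℂ] W))
    (p : G → W →ₗ[ℂ] W) (x : W) (H : ∀ g v, p g (R v x) = R (S.act g v) (p g x)) (u v w : V) :
    (R w (KK S p u v x) - KK S p u v (R w x)) + (R u (KK S p v w x) - KK S p v w (R u x))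
      + (R v (KK S p w u x) - KK S p w u (R v x)) = 0 := by
  have h1 : ∀ u v w, R w (KK S p u v x) - KK S p u v (R w x) =
      ∑ r, R (S.B r u v • (w - S.act (S.s r) w)) (p (S.s r) x) := by
    intro u v w
    simp only [KK, LinearMap.sum_apply, map_sum, LinearMap.smul_apply, map_smul, H, map_sub,
      LinearMap.sub_apply, smul_sub, Finset.sum_sub_distrib]
  rw [h1, h1, h1, ← Finset.sum_add_distrib, ← Finset.sum_add_distrib]
  refine Finset.sum_eq_zero fun r _ => ?_
  rw [← LinearMap.add_apply, ← LinearMap.add_apply, ← map_add, ← map_add, S.jac]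
  simp

theorem equ_op {W : Type} [AddCommGroup W] [Module ℂ W]
    (p : G → W →ₗ[ℂ] W) (x : W) (H : ∀ g h, p g (p h x) = p (g * h) x) (g : G) (u v : V) :
    p g (KK S p u v x) = KK S p (S.act g u) (S.act g v) (p g x) := by
  obtain ⟨e, he⟩ := S.equ g
  simp only [KK, LinearMap.sum_apply, map_sum, LinearMap.smul_apply, map_smul, H]
  symm
  rw [← Equiv.sum_comp e]
  refine Finset.sum_congr rfl fun r _ => ?_
  rw [(he r).2, (he r).1]
  simp

theorem rel (n : ℕ) :
    (∀ x ∈ DD ι G n, ∀ u v, rr S u (rr S v x) = rr S v (rr S u x) + KK S (pp S) u v x) ∧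
    (∀ x ∈ DD ι G n, ∀ g v, pp S g (rr S v x) = rr S (S.act g v) (pp S g x)) ∧
    (∀ x ∈ DD ι G n, ∀ g h, pp S g (pp S h x) = pp S (g * h) x) := by
  induction n with
  | zero =>
    have h0 : ∀ x ∈ DD ι G 0, x = 0 := by
      intro x hx
      exact DD_eq (f := LinearMap.id) (g := 0) (fun m h hm => by omega) x hx
    refine ⟨?_, ?_, ?_⟩ <;> intro x hx <;> rw [h0 x hx] <;> simp
  | succ n ih =>
    obtain ⟨ihC, ihG, ihH⟩ := ih
    have tauD : ∀ (m : Multiset ι) (h : G) i, m.card < n → tau S i (zz m h) ∈ DD ι G n :=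
      fun m h i hm => tau_DD S _ _ _ (zz_mem _ _ (by omega))
    refine ⟨?_, ?_, ?_⟩
    · -- commutators
      have key : ∀ (m : Multiset ι) (h : G), m.card < n + 1 → ∀ u v,
          rr S u (rr S v (zz m h)) = rr S v (rr S u (zz m h)) + KK S (pp S) u v (zz m h) := by
        intro m h hm
        apply C_lt
        intro i j hij
        induction m using min_ind with
        | h0 => exact rr_str S i j hij _ (by simp) _
        | h1 l m hl =>
          rw [Multiset.card_cons] at hm
          by_cases hjl : j ≤ l
          · refine rr_str S i j hij _ ?_ _
            intro a ha
            rcases Multiset.mem_cons.1 ha with rfl | ha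
            · exact hjl
            · exact hjl.trans (hl a ha)
          push Not at hjl
          have hx : zz m h ∈ DD ι G n := zz_mem _ _ (by omega)
          have Cl : ∀ a c, l < a → l < c →
              rr S (S.b a) (rr S (S.b l) (rr S (S.b c) (zz m h))) =
              rr S (S.b l) (rr S (S.b a) (rr S (S.b c) (zz m h))) +
                KK S (pp S) (S.b a) (S.b l) (rr S (S.b c) (zz m h)) := by
            intro a c ha hc
            have e1 := rr_str S a l ha (c ::ₘ m) (by
              intro q hq
              rcases Multiset.mem_cons.1 hq with rfl | hq
              · exact hc.le
              · exact hl q hq) h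
            have e2 := ihC _ (tauD m h c (by omega)) (S.b a) (S.b l)
            rw [rr_b S c, Zs_zz]
            simp only [map_add, e1, e2]
            abel
          rw [← rr_le S l m hl]
          have s1 := rr_str S j l hjl m hl h
          have s2 := rr_str S i l (hjl.trans hij) m hl h
          have s3 := ihC _ hx (S.b i) (S.b j)
          have J := jac_op S (rr S) (pp S) (zz m h) (ihG _ hx) (S.b i) (S.b j) (S.b l)
          rw [s1, s2, map_add, map_add, Cl i j (hjl.trans hij) hjl, Cl j i hjl (hjl.trans hij),
            s3, map_add]
          rw [KK_anti S _ (S.b l) (S.b i)] at J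
          simp only [LinearMap.neg_apply, map_neg] at J
          rw [← sub_eq_zero] at J ⊢
          rw [← J]
          abel
      intro x hx u v
      exact DD_eq (f := (rr S u).comp (rr S v)) (g := (rr S v).comp (rr S u) + KK S (pp S) u v)
        (fun m h hm => key m h hm u v) x hx
    · have key : ∀ (m : Multiset ι) (h : G), m.card < n + 1 → ∀ g v,
          pp S g (rr S v (zz m h)) = rr S (S.act g v) (pp S g (zz m h)) := by
        intro m h hm g v
        have : (pp S g) ∘ₗ ((rr S).flip (zz m h)) =
            ((rr S).flip (pp S g (zz m h))) ∘ₗ (S.act g) := by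
          apply S.b.ext
          intro i
          simp only [LinearMap.comp_apply, LinearMap.flip_apply]
          by_cases hi : ∀ a ∈ m, i ≤ a
          · rw [rr_le S i m hi, pp_cons S g i m hi]
          induction m using min_ind with
          | h0 => simp at hi
          | h1 l m hl =>
            rw [Multiset.card_cons] at hm
            have hli : l < i := by
              by_contra hcon
              push Not at hcon
              apply hi
              intro a ha
              rcases Multiset.mem_cons.1 ha with rfl | ha
              · exact hcon
              · exact hcon.trans (hl a ha)
            have hx : zz m h ∈ DD ι G n := zz_mem _ _ (by omega)
            have e1 : pp S g (rr S (S.b l) (rr S (S.b i) (zz m h))) =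
                rr S (S.act g (S.b l)) (pp S g (rr S (S.b i) (zz m h))) := by
              have hl' : ∀ a ∈ i ::ₘ m, l ≤ a := by
                intro q hq
                rcases Multiset.mem_cons.1 hq with rfl | hq
                · exact hli.le
                · exact hl q hq
              rw [rr_b S i, Zs_zz, map_add, map_add, rr_le S l _ hl', pp_cons S g l _ hl',
                ihG _ (tauD m h i (by omega)), map_add, map_add]
            rw [← rr_le S l m hl, rr_str S i l hli m hl h, map_add, e1, ihG _ hx, ihG _ hx,
              equ_op S (pp S) _ (ihH _ hx),
              ihC _ (pp_DD S n g _ hx) (S.act g (S.b i))]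
        exact congrArg (fun F : V →ₗ[ℂ] MM ι G => F v) this
      intro x hx g v
      exact DD_eq (f := (pp S g).comp (rr S v)) (g := (rr S (S.act g v)).comp (pp S g))
        (fun m h hm => key m h hm g v) x hx
    · intro x hx g h
      refine DD_eq (f := (pp S g).comp (pp S h)) (g := pp S (g * h))
        (fun m k hm => ?_) x hx
      simp only [LinearMap.comp_apply]
      induction m using min_ind with
      | h0 => simp only [pp_zero, mul_assoc]
      | h1 l m hl =>
        rw [Multiset.card_cons] at hm
        have hx : zz m k ∈ DD ι G n := zz_mem _ _ (by omega)
        rw [pp_cons S _ l m hl, pp_cons S _ l m hl, ihG _ (pp_DD S n h _ hx), ihH _ hx,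
          S.act_mul]

theorem relC (x : MM ι G) (u v : V) :
    rr S u (rr S v x) = rr S v (rr S u x) + KK S (pp S) u v x := by
  obtain ⟨n, hn⟩ := DD_all x
  exact (rel S n).1 x hn u v

theorem relG (x : MM ι G) (g : G) (v : V) :
    pp S g (rr S v x) = rr S (S.act g v) (pp S g x) := by
  obtain ⟨n, hn⟩ := DD_all x
  exact (rel S n).2.1 x hn g v

theorem relH (x : MM ι G) (g h : G) : pp S g (pp S h x) = pp S (g * h) x := by
  obtain ⟨n, hn⟩ := DD_all x
  exact (rel S n).2.2 x hn g h

theorem relOne (x : MM ι G) : pp S 1 x = x := by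
  have : pp S 1 = LinearMap.id := zz_ext fun m => by
    induction hn : m.card generalizing m with
    | zero =>
      intro h
      rw [Multiset.card_eq_zero.1 hn, pp_zero, one_mul]; rfl
    | succ n ih =>
      induction m using min_ind with
      | h0 => simp at hn
      | h1 l m hl =>
        intro h
        rw [pp_cons S _ l m hl, ih m (by simpa using hn), S.act_one]
        exact rr_le S l m hl h
  rw [this]; rfl

/-- The universal map to another module. -/
def theta {W : Type} [AddCommGroup W] [Module ℂ W] (S : SRD ι G V X)
    (R : V →ₗ[ℂ] (W →ₗ[ℂ] W)) (w : G → W) : MM ι G →ₗ[ℂ] W :=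
  Finsupp.linearCombination ℂ (fun p : Multiset ι × G =>
    (p.1.sort (· ≤ ·)).foldr (fun i x => R (S.b i) x) (w p.2))

theorem theta_zero {W : Type} [AddCommGroup W] [Module ℂ W]
    (R : V →ₗ[ℂ] (W →ₗ[ℂ] W)) (w : G → W) (h : G) : theta S R w (zz 0 h) = w h := by
  simp [theta, zz]

theorem theta_cons {W : Type} [AddCommGroup W] [Module ℂ W]
    (R : V →ₗ[ℂ] (W →ₗ[ℂ] W)) (w : G → W) (j : ι) (m : Multiset ι) (hm : ∀ a ∈ m, j ≤ a) (h : G) :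
    theta S R w (zz (j ::ₘ m) h) = R (S.b j) (theta S R w (zz m h)) := by
  simp [theta, zz, Multiset.sort_cons _ _ _ hm]

theorem theta_rel {W : Type} [AddCommGroup W] [Module ℂ W]
    (R : V →ₗ[ℂ] (W →ₗ[ℂ] W)) (P : G → W →ₗ[ℂ] W) (w : G → W)
    (hw : ∀ g h, P g (w h) = w (g * h))
    (hC : ∀ x i j, R (S.b i) (R (S.b j) x) = R (S.b j) (R (S.b i) x) + KK S P (S.b i) (S.b j) x)
    (hG : ∀ x g v, P g (R v x) = R (S.act g v) (P g x)) (n : ℕ) :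
    (∀ x ∈ DD ι G n, ∀ v, theta S R w (rr S v x) = R v (theta S R w x)) ∧
    (∀ x ∈ DD ι G n, ∀ g, theta S R w (pp S g x) = P g (theta S R w x)) := by
  induction n with
  | zero =>
    have h0 : ∀ x ∈ DD ι G 0, x = 0 := by
      intro x hx
      exact DD_eq (f := LinearMap.id) (g := 0) (fun m h hm => by omega) x hx
    refine ⟨?_, ?_⟩ <;> intro x hx <;> rw [h0 x hx] <;> simp
  | succ n ih =>
    obtain ⟨ihR, ihP⟩ := ih
    constructor
    · intro x hx v
      refine DD_eq (f := (theta S R w).comp (rr S v)) (g := (R v).comp (theta S R w))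
        (fun m h hm => ?_) x hx
      have : (theta S R w) ∘ₗ ((rr S).flip (zz m h)) = R.flip (theta S R w (zz m h)) := by
        apply S.b.ext
        intro i
        simp only [LinearMap.comp_apply, LinearMap.flip_apply]
        by_cases hi : ∀ a ∈ m, i ≤ a
        · rw [rr_le S i m hi, theta_cons S _ _ i m hi]
        induction m using min_ind with
        | h0 => simp at hi
        | h1 l m hl =>
          rw [Multiset.card_cons] at hm
          have hli : l < i := by
            by_contra hcon
            push Not at hcon
            apply hi
            intro a ha
            rcases Multiset.mem_cons.1 ha with rfl | ha
            · exact hcon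
            · exact hcon.trans (hl a ha)
          have hx : zz m h ∈ DD ι G n := zz_mem _ _ (by omega)
          have hl' : ∀ a ∈ i ::ₘ m, l ≤ a := by
            intro q hq
            rcases Multiset.mem_cons.1 hq with rfl | hq
            · exact hli.le
            · exact hl q hq
          have e1 : theta S R w (rr S (S.b l) (rr S (S.b i) (zz m h))) =
              R (S.b l) (theta S R w (rr S (S.b i) (zz m h))) := by
            rw [rr_b S i, Zs_zz, map_add, map_add, rr_le S l _ hl', theta_cons S _ _ l _ hl',
              ihR _ (tau_DD S _ _ _ (zz_mem _ _ (by omega))), map_add, map_add]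
          have e2 : theta S R w (KK S (pp S) (S.b i) (S.b l) (zz m h)) =
              KK S P (S.b i) (S.b l) (theta S R w (zz m h)) := by
            simp only [KK, LinearMap.sum_apply, LinearMap.smul_apply, map_sum, map_smul,
              ihP _ hx]
          rw [← rr_le S l m hl, rr_str S i l hli m hl h, map_add, e1, e2, ihR _ hx, ihR _ hx,
            hC _ i l]
      exact congrArg (fun F : V →ₗ[ℂ] W => F v) this
    · intro x hx g
      refine DD_eq (f := (theta S R w).comp (pp S g)) (g := (P g).comp (theta S R w))
        (fun m h hm => ?_) x hx
      simp only [LinearMap.comp_apply]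
      induction m using min_ind with
      | h0 => rw [pp_zero, theta_zero, theta_zero, hw]
      | h1 l m hl =>
        rw [Multiset.card_cons] at hm
        have hx : zz m h ∈ DD ι G n := zz_mem _ _ (by omega)
        rw [pp_cons S _ l m hl, theta_cons S _ _ l m hl, hG, ← ihP _ hx,
          ihR _ (pp_DD S n g _ hx)]

end PBWaux

namespace PBWaux

/-- index type of the variables, with the order opposite to the order in the monomials -/
def Idx (N : ℕ) : Type := Fin N × Fin 2

instance (N : ℕ) : LinearOrder (Idx N) :=
  LinearOrder.lift' (fun a : Fin N × Fin 2 => -(2 * (a.1.1 : ℤ) + (a.2.1 : ℤ))) (by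
    rintro ⟨⟨i, hi⟩, ⟨p, hp⟩⟩ ⟨⟨j, hj⟩, ⟨q, hq⟩⟩ h
    simp only at h
    have h1 : i = j := by omega
    have h2 : p = q := by omega
    subst h1 h2
    rfl)

instance (N : ℕ) : Fintype (Idx N) := inferInstanceAs (Fintype (Fin N × Fin 2))

/-- constructor -/
def mkI {N : ℕ} (i : Fin N) (p : Fin 2) : Idx N := ((i, p) : Fin N × Fin 2)

theorem Idx_le {N : ℕ} (i j : Fin N) (p q : Fin 2) :
    mkI i p ≤ mkI j q ↔ 2 * j.1 + q.1 ≤ 2 * i.1 + p.1 := by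
  change -(2 * (i.1 : ℤ) + (p.1 : ℤ)) ≤ -(2 * (j.1 : ℤ) + (q.1 : ℤ)) ↔ _
  omega

/-- basis of V -/
def bV (N : ℕ) : Module.Basis (Idx N) ℂ (Fin N → Fin 2 → ℂ) :=
  Module.Basis.ofEquivFun (LinearEquiv.curry ℂ ℂ (Fin N) (Fin 2)).symm

theorem bV_apply (N : ℕ) (i : Fin N) (p : Fin 2) :
    bV N (mkI i p) = Pi.single i (Pi.single p 1) := by
  apply (bV N).repr.injective
  ext x
  obtain ⟨a, q, rfl⟩ : ∃ a q, x = mkI a q := ⟨x.1, x.2, rfl⟩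
  have h : (bV N).repr (Pi.single i (Pi.single p 1)) (mkI a q) =
      (Pi.single i (Pi.single p 1) : Fin N → Fin 2 → ℂ) a q := rfl
  rw [h, Module.Basis.repr_self, Finsupp.single_apply]
  have h2 : mkI i p = mkI a q ↔ i = a ∧ p = q := by
    unfold mkI
    exact Prod.mk.injEq _ _ _ _ ▸ Iff.rfl
  by_cases ha : a = i
  · subst ha
    by_cases hb : q = p
    · subst hb; simp
    · simp [hb, h2, Ne.symm hb]
  · simp [ha, h2, Ne.symm ha]

variable {N : ℕ}

theorem sum_bV (v : Fin N → Fin 2 → ℂ) :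
    ∑ i : Fin N, ∑ p : Fin 2, v i p • bV N (mkI i p) = v := by
  ext a b
  simp only [bV_apply, Finset.sum_apply, Pi.smul_apply]
  rw [Finset.sum_eq_single a, Finset.sum_eq_single b]
  · simp
  · intro p _ hp; simp [Ne.symm hp]
  · simp
  · intro i _ hi; simp [Ne.symm hi]
  · simp

/-- symplectic form, bilinear -/
def om : (Fin 2 → ℂ) →ₗ[ℂ] (Fin 2 → ℂ) →ₗ[ℂ] ℂ :=
  LinearMap.mk₂ ℂ omL
    (by intros; simp [omL]; ring) (by intros; simp [omL]; ring)
    (by intros; simp [omL]; ring) (by intros; simp [omL]; ring)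

theorem om_def (u v : Fin 2 → ℂ) : om u v = u 0 * v 1 - u 1 * v 0 := rfl

theorem om_anti (u v : Fin 2 → ℂ) : om u v = - om v u := by
  simp only [om_def]; ring

theorem om_jac (u v w : Fin 2 → ℂ) : om u v • w + om v w • u + om w u • v = 0 := by
  ext a
  fin_cases a <;> simp [om_def] <;> ring

theorem om_inv (A : SL2) (u v : Fin 2 → ℂ) :
    om (Matrix.mulVec (A : Matrix (Fin 2) (Fin 2) ℂ) u)
      (Matrix.mulVec (A : Matrix (Fin 2) (Fin 2) ℂ) v) = om u v := by
  have h := A.2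
  rw [Matrix.det_fin_two] at h
  simp only [om_def, Matrix.mulVec, dotProduct, Fin.sum_univ_two]
  linear_combination (u 0 * v 1 - u 1 * v 0) * h

variable (Γ : Subgroup SL2)

/-- action of an element on L -/
def mv {Γ : Subgroup SL2} (γ : Γ) : (Fin 2 → ℂ) →ₗ[ℂ] (Fin 2 → ℂ) :=
  Matrix.mulVecLin ((γ : SL2) : Matrix (Fin 2) (Fin 2) ℂ)

variable {Γ}

theorem mv_mul (γ δ : Γ) (u : Fin 2 → ℂ) : mv (γ * δ) u = mv γ (mv δ u) := by
  simp [mv]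

theorem mv_one (u : Fin 2 → ℂ) : mv (1 : Γ) u = u := by
  simp [mv]

theorem mv_om (γ : Γ) (u v : Fin 2 → ℂ) : om (mv γ u) (mv γ v) = om u v := om_inv _ u v

theorem actL_apply (g : WP Γ N) (v : Fin N → Fin 2 → ℂ) (i : Fin N) :
    actL Γ N g v i = mv (g.left i) (v (g.right⁻¹ i)) := rfl

theorem wphi_apply (σ : Equiv.Perm (Fin N)) (f : Fin N → Γ) (i : Fin N) :
    wphi Γ N σ f i = f (σ⁻¹ i) := rfl

theorem actL_mul (g h : WP Γ N) (v : Fin N → Fin 2 → ℂ) :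
    actL Γ N (g * h) v = actL Γ N g (actL Γ N h v) := by
  funext i
  simp only [actL_apply, SemidirectProduct.mul_left, SemidirectProduct.mul_right, Pi.mul_apply,
    wphi_apply, mv_mul, mul_inv_rev, Equiv.Perm.mul_apply]

theorem actL_one (v : Fin N → Fin 2 → ℂ) : actL Γ N 1 v = v := by
  funext i
  simp [actL_apply, mv_one]

theorem tG_inv (i : Fin N) (γ : Γ) :
    (tG i γ)⁻¹ = (⟨Pi.mulSingle i γ⁻¹, 1⟩ : WP Γ N) := by
  rw [tG, ← map_inv, Pi.mulSingle_inv]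
  rfl

theorem tS_inv (i j : Fin N) (γ : Γ) :
    (tS i j γ)⁻¹ = (⟨Pi.mulSingle j γ * Pi.mulSingle i γ⁻¹, Equiv.swap i j⟩ : WP Γ N) := by
  rw [tS, mul_inv_rev, mul_inv_rev, inv_inv, tG_inv, tG, ← map_inv, Equiv.swap_inv]
  ext a
  · simp
  · simp

theorem tS_symm (i j : Fin N) (γ : Γ) (hij : i ≠ j) : tS j i γ⁻¹ = tS i j γ := by
  apply inv_injective
  rw [tS_inv, tS_inv, inv_inv, Equiv.swap_comm]
  congr 1
  exact Pi.mulSingle_commute hij _ _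

theorem perm_inv_self (σ : Equiv.Perm (Fin N)) (i : Fin N) : σ⁻¹ (σ i) = i :=
  σ.symm_apply_apply i

/-- index type for the reflections -/
abbrev XX (Γ : Subgroup SL2) (N : ℕ) : Type := Unit ⊕ (Fin N × Γ) ⊕ (Fin N × Fin N × Γ)

/-- group elements -/
def sX : XX Γ N → WP Γ N
  | Sum.inl _ => 1
  | Sum.inr (Sum.inl p) => (tG p.1 p.2)⁻¹
  | Sum.inr (Sum.inr p) => (tS p.1 p.2.1 p.2.2)⁻¹

/-- projection -/
def pj (i : Fin N) : (Fin N → Fin 2 → ℂ) →ₗ[ℂ] (Fin 2 → ℂ) := LinearMap.proj i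

theorem pj_apply (i : Fin N) (v : Fin N → Fin 2 → ℂ) : pj i v = v i := rfl

/-- inclusion -/
def sg (i : Fin N) : (Fin 2 → ℂ) →ₗ[ℂ] (Fin N → Fin 2 → ℂ) :=
  LinearMap.single ℂ (fun _ : Fin N => Fin 2 → ℂ) i

theorem sg_apply (i : Fin N) (v : Fin 2 → ℂ) : sg i v = Pi.single i v := rfl

/-- projection -/
def qq (i j : Fin N) (γ : Γ) : (Fin N → Fin 2 → ℂ) →ₗ[ℂ] (Fin 2 → ℂ) :=
  pj i - (mv γ⁻¹) ∘ₗ pj j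

theorem qq_apply (i j : Fin N) (γ : Γ) (v : Fin N → Fin 2 → ℂ) :
    qq i j γ v = v i - mv γ⁻¹ (v j) := rfl

/-- forms -/
def BX [DecidableEq Γ] (k : ℂ) (c : Γ → ℂ) :
    XX Γ N → (Fin N → Fin 2 → ℂ) →ₗ[ℂ] (Fin N → Fin 2 → ℂ) →ₗ[ℂ] ℂ
  | Sum.inl _ => - ∑ i : Fin N, om.compl₁₂ (pj i) (pj i)
  | Sum.inr (Sum.inl p) =>
      (if p.2 = 1 then 0 else - c p.2) • om.compl₁₂ (pj p.1) (pj p.1)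
  | Sum.inr (Sum.inr p) =>
      (if p.1 = p.2.1 then 0 else - (k / 4)) •
        om.compl₁₂ (qq p.1 p.2.1 p.2.2) (qq p.1 p.2.1 p.2.2)

/-- permutation of the reflections -/
def eX (g : WP Γ N) : XX Γ N → XX Γ N
  | Sum.inl x => Sum.inl x
  | Sum.inr (Sum.inl p) => Sum.inr (Sum.inl (g.right p.1,
      g.left (g.right p.1) * p.2 * (g.left (g.right p.1))⁻¹))
  | Sum.inr (Sum.inr p) => Sum.inr (Sum.inr (g.right p.1, g.right p.2.1,
      g.left (g.right p.2.1) * p.2.2 * (g.left (g.right p.1))⁻¹))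

theorem eX_inj (g : WP Γ N) : Function.Injective (eX g) := by
  rintro (x | ⟨i, γ⟩ | ⟨i, j, γ⟩) (y | ⟨i', γ'⟩ | ⟨i', j', γ'⟩) h
  · simpa [eX] using h
  · simp [eX] at h
  · simp [eX] at h
  · simp [eX] at h
  · simp only [eX, Sum.inr.injEq, Sum.inl.injEq, Prod.mk.injEq,
      EmbeddingLike.apply_eq_iff_eq] at h
    obtain ⟨rfl, h⟩ := h
    simpa using h
  · simp [eX] at h
  · simp [eX] at h
  · simp [eX] at h
  · simp only [eX, Sum.inr.injEq, Prod.mk.injEq,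
      EmbeddingLike.apply_eq_iff_eq] at h
    obtain ⟨rfl, rfl, h⟩ := h
    simpa using h

theorem jac_gen (a : ℂ) (q : (Fin N → Fin 2 → ℂ) →ₗ[ℂ] (Fin 2 → ℂ))
    (J : (Fin 2 → ℂ) →ₗ[ℂ] (Fin N → Fin 2 → ℂ))
    (A : (Fin N → Fin 2 → ℂ) →ₗ[ℂ] (Fin N → Fin 2 → ℂ)) (hA : ∀ w, w - A w = J (q w))
    (u v w : Fin N → Fin 2 → ℂ) :
    (a • om.compl₁₂ q q) u v • (w - A w) + (a • om.compl₁₂ q q) v w • (u - A u)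
      + (a • om.compl₁₂ q q) w u • (v - A v) = 0 := by
  simp only [hA, LinearMap.smul_apply, LinearMap.compl₁₂_apply, smul_eq_mul, mul_smul]
  rw [← smul_add, ← smul_add, ← map_smul J, ← map_smul J, ← map_smul J, ← map_add J, ← map_add J, om_jac]
  simp

theorem sX_conj (g : WP Γ N) (r : XX Γ N) : sX (eX g r) = g * sX r * g⁻¹ := by
  rw [eq_mul_inv_iff_mul_eq]
  obtain (x | ⟨i, γ⟩ | ⟨i, j, γ⟩) := r
  · simp [sX, eX]
  · simp only [sX, eX, tG_inv]
    ext1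
    · funext a
      simp only [SemidirectProduct.mul_left, Pi.mul_apply, wphi_apply]
      by_cases ha : a = g.right i
      · subst ha
        simp [mul_assoc]
      · have ha' : g.right⁻¹ a ≠ i := by
          rintro rfl; simp at ha
        rw [Pi.mulSingle_eq_of_ne ha, Pi.mulSingle_eq_of_ne ha']
        simp
    · simp
  · simp only [sX, eX, tS_inv]
    ext1
    · funext a
      simp only [SemidirectProduct.mul_left, Pi.mul_apply, wphi_apply]
      by_cases hij : i = j
      · subst hij
        by_cases ha : a = g.right i
        · subst ha; simp
        · have ha' : g.right⁻¹ a ≠ i := by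
            rintro rfl; simp at ha
          rw [Pi.mulSingle_eq_of_ne ha, Pi.mulSingle_eq_of_ne ha', Pi.mulSingle_eq_of_ne ha,
            Pi.mulSingle_eq_of_ne ha']
          simp
      have hji : j ≠ i := Ne.symm hij
      by_cases hi : a = g.right i
      · subst hi
        simp [hij, hji, mul_assoc]
      by_cases hj : a = g.right j
      · subst hj
        simp [hij, hji, mul_assoc]
      have hi' : g.right⁻¹ a ≠ i := by
        rintro rfl; simp at hi
      have hj' : g.right⁻¹ a ≠ j := by
        rintro rfl; simp at hj
      rw [Pi.mulSingle_eq_of_ne hi, Pi.mulSingle_eq_of_ne hi', Pi.mulSingle_eq_of_ne hj,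
            Pi.mulSingle_eq_of_ne hj', Equiv.swap_inv, Equiv.swap_apply_of_ne_of_ne hi hj]
      simp
    · simp only [SemidirectProduct.mul_right]
      rw [Equiv.mul_swap_eq_swap_mul]

theorem BX_equ [DecidableEq Γ] (k : ℂ) (c : Γ → ℂ) (hc : ∀ γ δ : Γ, c (δ * γ * δ⁻¹) = c γ)
    (g : WP Γ N) (r : XX Γ N) (u v : Fin N → Fin 2 → ℂ) :
    BX k c (eX g r) (actL Γ N g u) (actL Γ N g v) = BX k c r u v := by
  obtain (x | ⟨i, γ⟩ | ⟨i, j, γ⟩) := r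
  · simp only [BX, eX, LinearMap.neg_apply, LinearMap.sum_apply, LinearMap.compl₁₂_apply,
      pj_apply, actL_apply, mv_om]
    rw [Equiv.sum_comp (g.right⁻¹) (fun i => om (u i) (v i))]
  · simp only [BX, eX, LinearMap.smul_apply, LinearMap.compl₁₂_apply,
      pj_apply, actL_apply, mv_om, hc, perm_inv_self]
    congr 1
    simp [mul_inv_eq_one]
  · have hq : ∀ w, qq (g.right i) (g.right j)
        (g.left (g.right j) * γ * (g.left (g.right i))⁻¹) (actL Γ N g w)
        = mv (g.left (g.right i)) (qq i j γ w) := by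
      intro w
      simp only [qq_apply, actL_apply, perm_inv_self, map_sub, ← mv_mul]
      simp [mul_assoc]
    simp only [BX, eX, LinearMap.smul_apply, LinearMap.compl₁₂_apply, hq, mv_om]
    simp

variable [Fintype Γ] [DecidableEq Γ]

/-- the concrete data -/
def SS (N : ℕ) (k : ℂ) (c : Γ → ℂ) (hc : ∀ γ δ : Γ, c (δ * γ * δ⁻¹) = c γ) :
    SRD (Idx N) (WP Γ N) (Fin N → Fin 2 → ℂ) (XX Γ N) where
  b := bV N
  act := actL Γ N
  s := sX
  B := BX k c
  act_mul := actL_mul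
  act_one := actL_one
  anti := by
    rintro (x | ⟨i, γ⟩ | ⟨i, j, γ⟩) u v
    · simp only [BX, LinearMap.neg_apply, LinearMap.sum_apply, LinearMap.compl₁₂_apply,
        pj_apply, neg_neg]
      rw [← Finset.sum_neg_distrib]
      exact Finset.sum_congr rfl fun i _ => (om_anti _ _).symm
    · simp only [BX, LinearMap.smul_apply, LinearMap.compl₁₂_apply]
      rw [om_anti, smul_neg]
    · simp only [BX, LinearMap.smul_apply, LinearMap.compl₁₂_apply]
      rw [om_anti, smul_neg]
  jac := by
    rintro (x | ⟨i, γ⟩ | ⟨i, j, γ⟩) u v w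
    · simp [sX, actL_one]
    · refine jac_gen _ _ (sg i ∘ₗ (LinearMap.id - mv γ⁻¹)) _ ?_ u v w
      intro w
      funext a
      simp only [sX, tG_inv, Pi.sub_apply, actL_apply, LinearMap.comp_apply, pj_apply,
        LinearMap.sub_apply, LinearMap.id_apply, sg_apply]
      by_cases ha : a = i
      · subst ha; simp
      · simp [ha, mv_one]
    · by_cases hij : i = j
      · simp [BX, hij]
      have hji : j ≠ i := Ne.symm hij
      refine jac_gen _ _ (sg i - sg j ∘ₗ mv γ) _ ?_ u v w
      intro w
      funext a
      simp only [sX, tS_inv, Pi.sub_apply, actL_apply, LinearMap.comp_apply, qq_apply,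
        LinearMap.sub_apply, LinearMap.id_apply, sg_apply, Pi.mul_apply]
      by_cases hi : a = i
      · subst hi; simp [hij, hji]
      by_cases hj : a = j
      · subst hj; simp [hij, hji, ← mv_mul, mv_one]
      rw [Equiv.swap_inv, Equiv.swap_apply_of_ne_of_ne hi hj]
      simp [hi, hj, mv_one]
  equ := fun g => ⟨Equiv.ofBijective (eX g) (Finite.injective_iff_bijective.1 (eX_inj g)),
    fun r => ⟨sX_conj g r, fun u v => BX_equ k c hc g r u v⟩⟩

end PBWaux

namespace PBWaux

variable {N : ℕ} {Γ : Subgroup SL2} [Fintype Γ] [DecidableEq Γ]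

theorem BX_T (k : ℂ) (c : Γ → ℂ) (a : Fin N) (γ : Γ) (u v : Fin N → Fin 2 → ℂ) :
    BX k c (Sum.inr (Sum.inl (a, γ))) u v = (if γ = 1 then 0 else - c γ) * om (u a) (v a) := rfl

theorem BX_S (k : ℂ) (c : Γ → ℂ) (a b : Fin N) (γ : Γ) (u v : Fin N → Fin 2 → ℂ) :
    BX k c (Sum.inr (Sum.inr (a, b, γ))) u v = (if a = b then 0 else - (k / 4)) *
      om (u a - mv γ⁻¹ (u b)) (v a - mv γ⁻¹ (v b)) := rfl

theorem Kii {W : Type} [AddCommGroup W] [Module ℂ W] (k : ℂ) (c : Γ → ℂ) (F : WP Γ N → W)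
    (i : Fin N) (u v : Fin 2 → ℂ) :
    ∑ r, BX k c r (Pi.single i u) (Pi.single i v) • F (sX r) =
      -(om u v • (F 1 + (k / 2) • ∑ j ∈ Finset.univ.filter (fun j : Fin N => j ≠ i),
            ∑ γ : Γ, F (tS i j γ)⁻¹
          + ∑ γ ∈ Finset.univ.filter (fun γ : Γ => γ ≠ 1), c γ • F (tG i γ)⁻¹)) := by
  have hU : ∑ x : Unit, BX k c (Sum.inl x : XX Γ N) (Pi.single i u) (Pi.single i v) •
      F (sX (Sum.inl x)) = -(om u v • F 1) := by
    simp only [BX, sX, LinearMap.neg_apply, LinearMap.sum_apply, LinearMap.compl₁₂_apply, pj_apply]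
    rw [Finset.sum_eq_single i]
    · simp
    · intro a _ ha; simp [ha]
    · simp
  have hT : ∑ x : Fin N × Γ, BX k c (Sum.inr (Sum.inl x) : XX Γ N) (Pi.single i u) (Pi.single i v) •
      F (sX (Sum.inr (Sum.inl x))) =
      -(om u v • ∑ γ ∈ Finset.univ.filter (fun γ : Γ => γ ≠ 1), c γ • F (tG i γ)⁻¹) := by
    rw [Fintype.sum_prod_type, Finset.sum_eq_single i]
    · rw [Finset.smul_sum, ← Finset.sum_neg_distrib, Finset.sum_filter]
      refine Finset.sum_congr rfl fun γ _ => ?_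
      by_cases h : γ = 1
      · simp [BX_T, BX_S, h]
      · simp [BX_T, BX_S, h, sX, pj_apply, mul_smul, smul_comm (om u v) (c γ)]
    · intro a _ ha
      simp [BX_T, BX_S, pj_apply, ha]
    · simp
  have hS : ∑ x : Fin N × Fin N × Γ,
      BX k c (Sum.inr (Sum.inr x) : XX Γ N) (Pi.single i u) (Pi.single i v) •
      F (sX (Sum.inr (Sum.inr x))) =
      -(om u v • (k / 2) • ∑ j ∈ Finset.univ.filter (fun j : Fin N => j ≠ i),
            ∑ γ : Γ, F (tS i j γ)⁻¹) := by
    have h1 : ∀ a b : Fin N, ∑ γ : Γ,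
        BX k c (Sum.inr (Sum.inr (a, b, γ)) : XX Γ N) (Pi.single i u) (Pi.single i v) •
          F (sX (Sum.inr (Sum.inr (a, b, γ)))) =
        (if a = i then (if b ≠ i then (-(k / 4) * om u v) • ∑ γ : Γ, F (tS i b γ)⁻¹ else 0) else 0) +
        (if b = i then (if a ≠ i then (-(k / 4) * om u v) • ∑ γ : Γ, F (tS i a γ)⁻¹ else 0) else 0) := by
      intro a b
      by_cases hab : a = b
      · subst hab
        by_cases hai : a = i <;> simp [BX_T, BX_S, hai]
      by_cases hai : a = i
      · subst hai
        have hba : b ≠ a := Ne.symm hab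
        simp only [hba, if_true, if_false, add_zero, ne_eq, not_false_eq_true]
        rw [Finset.smul_sum]
        refine Finset.sum_congr rfl fun γ _ => ?_
        simp [BX_T, BX_S, sX, hab, qq_apply, hba]
      by_cases hbi : b = i
      · subst hbi
        simp only [hai, if_true, if_false, zero_add, ne_eq, not_false_eq_true]
        rw [Finset.smul_sum, ← Equiv.sum_comp (Equiv.inv Γ)]
        refine Finset.sum_congr rfl fun γ _ => ?_
        simp only [Equiv.inv_apply, sX, tS_symm b a γ (Ne.symm hai)]
        have hba : b ≠ a := Ne.symm hab
        simp [BX_T, BX_S, hab, qq_apply, hba, mv_om]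
      · simp [BX_T, BX_S, qq_apply, hai, hbi, Ne.symm hai, Ne.symm hbi]
    simp only [Fintype.sum_prod_type, h1, Finset.sum_add_distrib]
    rw [Finset.sum_comm (f := fun a b => if b = i then _ else _)]
    simp only [Finset.sum_ite_irrel, Finset.sum_const_zero, Finset.sum_ite_eq', Finset.mem_univ, if_true]
    rw [← Finset.sum_filter, ← Finset.smul_sum, ← add_smul, ← neg_smul, smul_smul]
    congr 1
    ring
  rw [Fintype.sum_sum_type, Fintype.sum_sum_type, hU, hT, hS, smul_add, smul_add]
  abel

theorem Kij {W : Type} [AddCommGroup W] [Module ℂ W] (k : ℂ) (c : Γ → ℂ) (F : WP Γ N → W)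
    (i j : Fin N) (hij : i ≠ j) (u v : Fin 2 → ℂ) :
    ∑ r, BX k c r (Pi.single i u) (Pi.single j v) • F (sX r) =
      -((-(k / 2)) • ∑ γ : Γ, omL (Matrix.mulVec ((γ : SL2) : Matrix (Fin 2) (Fin 2) ℂ) u) v
        • F (tS i j γ)⁻¹) := by
  have hji := Ne.symm hij
  have hU : ∑ x : Unit, BX k c (Sum.inl x : XX Γ N) (Pi.single i u) (Pi.single j v) •
      F (sX (Sum.inl x)) = 0 := by
    simp only [BX, sX, LinearMap.neg_apply, LinearMap.sum_apply, LinearMap.compl₁₂_apply, pj_apply]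
    have h0 : ∑ d : Fin N, om ((Pi.single i u : Fin N → Fin 2 → ℂ) d)
        ((Pi.single j v : Fin N → Fin 2 → ℂ) d) = 0 := by
      refine Finset.sum_eq_zero fun a _ => ?_
      by_cases ha : a = i
      · subst ha; simp [hij]
      · simp [ha]
    rw [h0]
    simp
  have hT : ∑ x : Fin N × Γ, BX k c (Sum.inr (Sum.inl x) : XX Γ N) (Pi.single i u) (Pi.single j v) •
      F (sX (Sum.inr (Sum.inl x))) = 0 := by
    apply Finset.sum_eq_zero
    rintro ⟨a, γ⟩ _
    by_cases ha : a = i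
    · subst ha; simp [BX_T, BX_S, pj_apply, hij]
    · simp [BX_T, BX_S, pj_apply, ha]
  have hadj : ∀ γ : Γ, om u (mv γ⁻¹ v) = om (mv γ u) v := by
    intro γ
    rw [← mv_om γ u, ← mv_mul]
    simp [mv_one]
  have hadj' : ∀ γ : Γ, om (mv γ v) u = - om (mv γ⁻¹ u) v := by
    intro γ
    rw [om_anti, ← hadj, inv_inv]
  have hS : ∑ x : Fin N × Fin N × Γ,
      BX k c (Sum.inr (Sum.inr x) : XX Γ N) (Pi.single i u) (Pi.single j v) •
      F (sX (Sum.inr (Sum.inr x))) =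
      (k / 2) • ∑ γ : Γ, om (mv γ u) v • F (tS i j γ)⁻¹ := by
    have h1 : ∀ a b : Fin N, ∑ γ : Γ,
        BX k c (Sum.inr (Sum.inr (a, b, γ)) : XX Γ N) (Pi.single i u) (Pi.single j v) •
          F (sX (Sum.inr (Sum.inr (a, b, γ)))) =
        (if a = i then (if b = j then (k / 4) • ∑ γ : Γ, om (mv γ u) v • F (tS i j γ)⁻¹
          else 0) else 0) +
        (if a = j then (if b = i then (k / 4) • ∑ γ : Γ, om (mv γ u) v • F (tS i j γ)⁻¹
          else 0) else 0) := by
      intro a b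
      by_cases hab : a = b
      · subst hab
        by_cases hai : a = i
        · subst hai; simp [BX_T, BX_S, hij]
        · simp [BX_T, BX_S, hai]
      have hba : b ≠ a := Ne.symm hab
      by_cases hai : a = i
      · subst hai
        by_cases hbj : b = j
        · subst hbj
          simp only [hab, if_true, if_false, add_zero, Finset.smul_sum]
          refine Finset.sum_congr rfl fun γ _ => ?_
          simp [BX_T, BX_S, sX, qq_apply, hab, hba, hadj, mul_smul]
        · simp [BX_T, BX_S, qq_apply, hij, hbj, hba, Ne.symm hbj]
      by_cases haj : a = j
      · subst haj
        by_cases hbi : b = i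
        · subst hbi
          simp only [hab, if_true, if_false, zero_add, Finset.smul_sum]
          rw [← Equiv.sum_comp (Equiv.inv Γ)]
          refine Finset.sum_congr rfl fun γ _ => ?_
          simp only [Equiv.inv_apply, sX, tS_symm b a γ hba]
          simp [BX_T, BX_S, qq_apply, hab, hba, mul_smul]
        · simp [BX_T, BX_S, qq_apply, hai, hbi, Ne.symm hbi, hba, Ne.symm hai]
      · by_cases hbi : b = i
        · subst hbi
          simp [BX_T, BX_S, qq_apply, hai, haj, hij, Ne.symm haj]
        · simp [BX_T, BX_S, qq_apply, hai, haj, hbi]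
    simp only [Fintype.sum_prod_type, h1, Finset.sum_add_distrib]
    simp only [Finset.sum_ite_irrel, Finset.sum_const_zero, Finset.sum_ite_eq', Finset.mem_univ, if_true]
    rw [← add_smul]
    congr 1
    ring
  rw [Fintype.sum_sum_type, Fintype.sum_sum_type, hU, hT, hS, neg_smul, neg_neg, zero_add, zero_add]
  rfl

end PBWaux

namespace PBWaux

variable {N : ℕ} {Γ : Subgroup SL2} [Fintype Γ] [DecidableEq Γ]
  (k : ℂ) (c : Γ → ℂ) (hc : ∀ γ δ : Γ, c (δ * γ * δ⁻¹) = c γ)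

/-- the representation space -/
abbrev Mo (Γ : Subgroup SL2) (N : ℕ) : Type := MM (Idx N) (WP Γ N)

/-- the right representation on the free algebra -/
def phi0 : FreeAlgebra ℂ (WP Γ N ⊕ Fin N × Fin 2) →ₐ[ℂ] (Module.End ℂ (Mo Γ N))ᵐᵒᵖ :=
  FreeAlgebra.lift ℂ (Sum.elim (fun g => MulOpposite.op (pp (SS N k c hc) g⁻¹))
    (fun a => MulOpposite.op (rr (SS N k c hc) (bV N (mkI a.1 a.2)))))

theorem phi0_G (g : WP Γ N) :
    phi0 k c hc (nG Γ N g) = MulOpposite.op (pp (SS N k c hc) g⁻¹) := by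
  simp [phi0, nG]

theorem phi0_X (i : Fin N) (p : Fin 2) :
    phi0 k c hc (nX Γ N i p) = MulOpposite.op (rr (SS N k c hc) (bV N (mkI i p))) := by
  simp [phi0, nX]

theorem phi0_V (v : Fin N → Fin 2 → ℂ) :
    phi0 k c hc (nV Γ N v) = MulOpposite.op (rr (SS N k c hc) v) := by
  conv_rhs => rw [← sum_bV v]
  simp only [nV, map_sum, map_smul, phi0_X, Finset.op_sum, MulOpposite.op_smul]

theorem phi0_rel {a b : FreeAlgebra ℂ (WP Γ N ⊕ Fin N × Fin 2)} (h : HRel Γ N k c a b) :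
    phi0 k c hc a = phi0 k c hc b := by
  have comm : ∀ u v : Fin N → Fin 2 → ℂ, ∀ x : Mo Γ N,
      rr (SS N k c hc) v (rr (SS N k c hc) u x) - rr (SS N k c hc) u (rr (SS N k c hc) v x) =
      - ∑ r, BX k c r u v • pp (SS N k c hc) (sX r) x := by
    intro u v x
    rw [relC _ x u v, sub_add_cancel_left, KK, LinearMap.sum_apply]
    rfl
  induction h with
  | grp_mul g h =>
    rw [map_mul, phi0_G, phi0_G, phi0_G, ← MulOpposite.op_mul]
    refine congrArg MulOpposite.op (LinearMap.ext fun x => ?_)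
    rw [Module.End.mul_apply, relH, mul_inv_rev]
  | grp_one =>
    rw [map_one, phi0_G, ← MulOpposite.op_one]
    refine congrArg MulOpposite.op (LinearMap.ext fun x => ?_)
    rw [inv_one, relOne]; rfl
  | grp_conj g v =>
    rw [map_mul, map_mul, phi0_G, phi0_G, phi0_V, phi0_V, ← MulOpposite.op_mul,
      ← MulOpposite.op_mul]
    refine congrArg MulOpposite.op (LinearMap.ext fun x => ?_)
    rw [Module.End.mul_apply, Module.End.mul_apply, inv_inv, relG, relH, mul_inv_cancel, relOne]
    rfl
  | r1 i =>
    apply MulOpposite.unop_injective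
    refine LinearMap.ext fun x => ?_
    have h1 := comm (bV N (mkI i 0)) (bV N (mkI i 1)) x
    rw [bV_apply, bV_apply, Kii k c (fun g => pp (SS N k c hc) g x), neg_neg] at h1
    have h2 : om (Pi.single 0 1) (Pi.single 1 1) = 1 := by simp [om_def]
    rw [h2, one_smul, relOne] at h1
    simp only [map_sub, map_mul, map_add, map_sum, map_smul, map_one, phi0_G, phi0_X, bV_apply,
      MulOpposite.unop_sub, MulOpposite.unop_mul, MulOpposite.unop_op, MulOpposite.unop_add,
      Finset.unop_sum, MulOpposite.unop_smul, MulOpposite.unop_one,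
      LinearMap.sub_apply, LinearMap.add_apply, LinearMap.sum_apply, LinearMap.smul_apply,
      Module.End.mul_apply, Module.End.one_apply]
    exact h1
  | r2 i j hij u v =>
    apply MulOpposite.unop_injective
    refine LinearMap.ext fun x => ?_
    have h1 := comm (Pi.single i u) (Pi.single j v) x
    rw [Kij k c (fun g => pp (SS N k c hc) g x) i j hij, neg_neg] at h1
    simp only [map_sub, map_mul, map_add, map_sum, map_smul, map_one, phi0_G, phi0_V,
      MulOpposite.unop_sub, MulOpposite.unop_mul, MulOpposite.unop_op, MulOpposite.unop_add,
      Finset.unop_sum, MulOpposite.unop_smul, MulOpposite.unop_one,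
      LinearMap.sub_apply, LinearMap.add_apply, LinearMap.sum_apply, LinearMap.smul_apply,
      Module.End.mul_apply, Module.End.one_apply]
    exact h1

/-- the right representation -/
def phi : HN Γ N k c →ₐ[ℂ] (Module.End ℂ (Mo Γ N))ᵐᵒᵖ :=
  RingQuot.liftAlgHom ℂ ⟨phi0 k c hc, fun _ _ h => phi0_rel k c hc h⟩

theorem phi_mk (a : FreeAlgebra ℂ (WP Γ N ⊕ Fin N × Fin 2)) :
    phi k c hc (RingQuot.mkAlgHom ℂ (HRel Γ N k c) a) = phi0 k c hc a := by
  simp [phi]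

/-- vectors in H -/
def hV : (Fin N → Fin 2 → ℂ) →ₗ[ℂ] HN Γ N k c :=
  (bV N).constr ℂ (fun a => hX Γ N k c a.1 a.2)

theorem hV_b (i : Fin N) (p : Fin 2) : hV k c (bV N (mkI i p)) = hX Γ N k c i p := by
  rw [hV, Module.Basis.constr_basis]; rfl

theorem hV_mk (v : Fin N → Fin 2 → ℂ) :
    RingQuot.mkAlgHom ℂ (HRel Γ N k c) (nV Γ N v) = hV k c v := by
  conv_rhs => rw [← sum_bV v]
  simp only [nV, map_sum, map_smul, hV_b]
  rfl

theorem hG_mul (g h : WP Γ N) : hG Γ N k c g * hG Γ N k c h = hG Γ N k c (g * h) := by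
  rw [hG, hG, ← map_mul]
  exact RingQuot.mkAlgHom_rel ℂ (HRel.grp_mul g h)

theorem hG_one : hG Γ N k c 1 = 1 := by
  rw [hG, RingQuot.mkAlgHom_rel ℂ (HRel.grp_one), map_one]

theorem hG_conj (g : WP Γ N) (v : Fin N → Fin 2 → ℂ) :
    hV k c v * hG Γ N k c g⁻¹ = hG Γ N k c g⁻¹ * hV k c (actL Γ N g v) := by
  have h := RingQuot.mkAlgHom_rel ℂ (HRel.grp_conj (k := k) (c := c) g v)
  rw [map_mul, map_mul, hV_mk, hV_mk] at h
  change hG Γ N k c g * hV k c v * hG Γ N k c g⁻¹ = _ at h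
  rw [← h, mul_assoc, ← mul_assoc, hG_mul, inv_mul_cancel, hG_one, one_mul]

/-- right multiplication by vectors -/
def RH : (Fin N → Fin 2 → ℂ) →ₗ[ℂ] (HN Γ N k c →ₗ[ℂ] HN Γ N k c) :=
  (LinearMap.mul ℂ (HN Γ N k c)).flip ∘ₗ hV k c

theorem RH_apply (v : Fin N → Fin 2 → ℂ) (x : HN Γ N k c) : RH k c v x = x * hV k c v := rfl

/-- right multiplication by inverse group elements -/
def PH (g : WP Γ N) : HN Γ N k c →ₗ[ℂ] HN Γ N k c :=
  (LinearMap.mul ℂ (HN Γ N k c)).flip (hG Γ N k c g⁻¹)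

theorem PH_apply (g : WP Γ N) (x : HN Γ N k c) : PH k c g x = x * hG Γ N k c g⁻¹ := rfl

theorem H_r1 (i : Fin N) : hX Γ N k c i 0 * hX Γ N k c i 1 - hX Γ N k c i 1 * hX Γ N k c i 0 =
    1 + (k / 2) • ∑ j ∈ Finset.univ.filter (fun j : Fin N => j ≠ i),
            ∑ γ : Γ, hG Γ N k c (tS i j γ)
          + ∑ γ ∈ Finset.univ.filter (fun γ : Γ => γ ≠ 1), c γ • hG Γ N k c (tG i γ) := by
  have h := RingQuot.mkAlgHom_rel ℂ (HRel.r1 (k := k) (c := c) i)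
  simp only [map_sub, map_mul, map_add, map_sum, map_smul, map_one] at h
  exact h

theorem H_r2 (i j : Fin N) (hij : i ≠ j) (u v : Fin 2 → ℂ) :
    hV k c (Pi.single i u) * hV k c (Pi.single j v) - hV k c (Pi.single j v) * hV k c (Pi.single i u)
     = (-(k / 2)) • ∑ γ : Γ,
          omL (Matrix.mulVec ((γ : SL2) : Matrix (Fin 2) (Fin 2) ℂ) u) v • hG Γ N k c (tS i j γ) := by
  have h := RingQuot.mkAlgHom_rel ℂ (HRel.r2 (k := k) (c := c) i j hij u v)
  simp only [map_sub, map_mul, map_sum, map_smul, hV_mk] at h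
  exact h

theorem RH_comm (x : HN Γ N k c) (a b : Idx N) :
    RH k c (bV N a) (RH k c (bV N b) x) = RH k c (bV N b) (RH k c (bV N a) x) +
      KK (SS N k c hc) (PH k c) (bV N a) (bV N b) x := by
  obtain ⟨i, p, rfl⟩ : ∃ i p, a = mkI i p := ⟨a.1, a.2, rfl⟩
  obtain ⟨j, q, rfl⟩ : ∃ j q, b = mkI j q := ⟨b.1, b.2, rfl⟩
  have hK : KK (SS N k c hc) (PH k c) (bV N (mkI i p)) (bV N (mkI j q)) x =
      ∑ r, BX k c r (bV N (mkI i p)) (bV N (mkI j q)) • PH k c (sX r) x := by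
    rw [KK, LinearMap.sum_apply]; rfl
  rw [hK, RH_apply, RH_apply, RH_apply, RH_apply]
  by_cases hij : i = j
  · subst hij
    have h1 := H_r1 k c (Γ := Γ) i
    rw [bV_apply, bV_apply, Kii k c (fun g => PH k c g x)]
    rw [← bV_apply, ← bV_apply, hV_b, hV_b]
    have h2 : PH k c 1 x + (k / 2) • ∑ j ∈ Finset.univ.filter (fun j : Fin N => j ≠ i),
            ∑ γ : Γ, PH k c (tS i j γ)⁻¹ x
          + ∑ γ ∈ Finset.univ.filter (fun γ : Γ => γ ≠ 1), c γ • PH k c (tG i γ)⁻¹ x =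
          x * (hX Γ N k c i 0 * hX Γ N k c i 1 - hX Γ N k c i 1 * hX Γ N k c i 0) := by
      rw [h1]
      simp only [PH_apply, inv_inv, mul_add, mul_one, Finset.mul_sum, mul_smul_comm, inv_one,
        hG_one]
    rw [h2]
    fin_cases p <;> fin_cases q <;> simp [om_def, mul_sub, mul_assoc]
  · rw [bV_apply, bV_apply, Kij k c (fun g => PH k c g x) i j hij]
    have h1 := H_r2 k c (Γ := Γ) i j hij (Pi.single p 1) (Pi.single q 1)
    have h2 := congrArg (fun y => x * y) h1
    simp only [mul_sub, mul_smul_comm, Finset.mul_sum] at h2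
    simp only [PH_apply, inv_inv]
    rw [← h2]
    simp only [mul_assoc]
    abel

/-- the inverse map -/
def th : Mo Γ N →ₗ[ℂ] HN Γ N k c :=
  theta (SS N k c hc) (RH k c) (fun h => hG Γ N k c h⁻¹)

theorem th_rel (n : ℕ) :
    (∀ x ∈ DD (Idx N) (WP Γ N) n, ∀ v,
      th k c hc (rr (SS N k c hc) v x) = th k c hc x * hV k c v) ∧
    (∀ x ∈ DD (Idx N) (WP Γ N) n, ∀ g,
      th k c hc (pp (SS N k c hc) g x) = th k c hc x * hG Γ N k c g⁻¹) := by
  refine theta_rel (SS N k c hc) (RH k c) (PH k c) (fun h => hG Γ N k c h⁻¹) ?_ ?_ ?_ n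
  · intro g h
    rw [PH_apply, hG_mul, mul_inv_rev]
  · exact RH_comm k c hc
  · intro x g v
    rw [PH_apply, RH_apply, RH_apply, PH_apply, mul_assoc, mul_assoc, hG_conj]
    rfl

theorem th_phi (a : HN Γ N k c) (x : Mo Γ N) :
    th k c hc ((phi k c hc a).unop x) = th k c hc x * a := by
  obtain ⟨a, rfl⟩ := RingQuot.mkAlgHom_surjective ℂ (HRel Γ N k c) a
  rw [phi_mk]
  induction a using FreeAlgebra.induction generalizing x with
  | grade0 r =>
    rw [AlgHom.commutes, AlgHom.commutes, Algebra.algebraMap_eq_smul_one,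
      Algebra.algebraMap_eq_smul_one, mul_smul_comm, mul_one]
    simp
  | grade1 s =>
    obtain ⟨n, hn⟩ := DD_all x
    rcases s with g | ⟨i, p⟩
    · change th k c hc ((phi0 k c hc (nG Γ N g)).unop x) = th k c hc x * hG Γ N k c g
      rw [phi0_G, MulOpposite.unop_op, (th_rel k c hc n).2 x hn, inv_inv]
    · change th k c hc ((phi0 k c hc (nX Γ N i p)).unop x) = th k c hc x * hX Γ N k c i p
      rw [phi0_X, MulOpposite.unop_op, (th_rel k c hc n).1 x hn, hV_b]
  | mul a b ha hb =>
    rw [map_mul, map_mul, MulOpposite.unop_mul, Module.End.mul_apply, hb, ha, mul_assoc]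
  | add a b ha hb =>
    rw [map_add, map_add, MulOpposite.unop_add, LinearMap.add_apply, map_add, hb, ha, mul_add]

theorem phi_X_pow (i : Fin N) (p : Fin 2) (n : ℕ) (m : Multiset (Idx N)) (h : WP Γ N)
    (hm : ∀ a ∈ m, mkI i p ≤ a) :
    (phi k c hc (hX Γ N k c i p ^ n)).unop (zz m h) = zz (m + Multiset.replicate n (mkI i p)) h := by
  induction n with
  | zero => simp
  | succ n ih =>
    rw [pow_succ, map_mul, MulOpposite.unop_mul, Module.End.mul_apply, ih, hX, phi_mk, phi0_X,
      MulOpposite.unop_op, Multiset.replicate_succ, Multiset.add_cons]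
    refine rr_le (SS N k c hc) (mkI i p) _ ?_ h
    intro a ha
    rcases Multiset.mem_add.1 ha with ha | ha
    · exact hm a ha
    · rw [Multiset.eq_of_mem_replicate ha]

/-- block of variables -/
def blk (e : Fin N × Fin 2 → ℕ) (i : Fin N) : Multiset (Idx N) :=
  Multiset.replicate (e (i, 0)) (mkI i 0) + Multiset.replicate (e (i, 1)) (mkI i 1)

theorem phi_list (e : Fin N × Fin 2 → ℕ) (h : WP Γ N) (l : List (Fin N)) (hl : l.Pairwise (· < ·))
    (m : Multiset (Idx N)) (hm : ∀ i ∈ l, ∀ a ∈ m, mkI i 0 ≤ a) :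
    (phi k c hc (l.map fun i => hX Γ N k c i 0 ^ e (i, 0) * hX Γ N k c i 1 ^ e (i, 1)).prod).unop
      (zz m h) = zz (m + (l.map (blk e)).sum) h := by
  induction l generalizing m with
  | nil => simp
  | cons i l ih =>
    rw [List.pairwise_cons] at hl
    have h0 : ∀ a ∈ m, mkI i 0 ≤ a := hm i (by simp)
    have h01 : mkI i 1 ≤ mkI i 0 := by rw [Idx_le]; simp
    have h1 : ∀ a ∈ m + Multiset.replicate (e (i, 0)) (mkI i 0), mkI i 1 ≤ a := by
      intro a ha
      rcases Multiset.mem_add.1 ha with ha | ha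
      · exact h01.trans (h0 a ha)
      · rw [Multiset.eq_of_mem_replicate ha]; exact h01
    rw [List.map_cons, List.prod_cons, map_mul, MulOpposite.unop_mul, Module.End.mul_apply,
      map_mul, MulOpposite.unop_mul, Module.End.mul_apply, phi_X_pow k c hc i 0 _ m h h0,
      phi_X_pow k c hc i 1 _ _ h h1, ih hl.2]
    · rw [List.map_cons, List.sum_cons, blk]
      congr 1
      simp only [add_assoc]
    · intro j hj a ha
      have hij : i < j := hl.1 j hj
      rw [Multiset.mem_add] at ha
      rcases ha with ha | ha
      · rw [Multiset.mem_add] at ha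
        rcases ha with ha | ha
        · exact hm j (by simp [hj]) a ha
        · rw [Multiset.eq_of_mem_replicate ha, Idx_le]
          have : i.1 < j.1 := hij
          simp; omega
      · rw [Multiset.eq_of_mem_replicate ha, Idx_le]
        have : i.1 < j.1 := hij
        simp; omega

/-- the multiset of an exponent -/
def mset (e : Fin N × Fin 2 → ℕ) : Multiset (Idx N) := ((List.finRange N).map (blk e)).sum

theorem phi_pbw (g : WP Γ N) (e : Fin N × Fin 2 → ℕ) :
    (phi k c hc (pbwMono Γ N k c g e)).unop (zz 0 1) = zz (mset e) g⁻¹ := by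
  rw [pbwMono, map_mul, MulOpposite.unop_mul, Module.End.mul_apply, hG, phi_mk, phi0_G,
    MulOpposite.unop_op, pp_zero, mul_one, phi_list, zero_add, mset]
  · exact List.pairwise_lt_finRange N
  · simp

theorem count_mset (e : Fin N × Fin 2 → ℕ) (i : Fin N) (p : Fin 2) :
    (mset e).count (mkI i p) = e (i, p) := by
  have hinj : ∀ (i j : Fin N) (p q : Fin 2), mkI i p = mkI j q ↔ i = j ∧ p = q := by
    intro i j p q
    unfold mkI
    exact Prod.mk.injEq _ _ _ _ ▸ Iff.rfl
  have : mset e = ∑ i, blk e i := by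
    rw [mset, ← List.ofFn_eq_map, List.sum_ofFn]
  rw [this, Multiset.count_sum', Finset.sum_eq_single i]
  · fin_cases p <;> simp [blk, Multiset.count_replicate, hinj]
  · intro j _ hj
    simp [blk, Multiset.count_replicate, hinj, hj]
  · simp

theorem th_zz (g : WP Γ N) (e : Fin N × Fin 2 → ℕ) :
    th k c hc (zz (mset e) g⁻¹) = pbwMono Γ N k c g e := by
  rw [← phi_pbw k c hc, th_phi, th, theta_zero, inv_one, hG_one, one_mul]

theorem mset_surj (m : Multiset (Idx N)) : ∃ e, mset e = m := by
  refine ⟨fun a => m.count (mkI a.1 a.2), ?_⟩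
  ext x
  obtain ⟨i, p, rfl⟩ : ∃ i p, x = mkI i p := ⟨x.1, x.2, rfl⟩
  rw [count_mset]

theorem mset_inj : Function.Injective (mset (N := N)) := by
  intro e e' h
  funext ⟨i, p⟩
  rw [← count_mset e, h, count_mset]

end PBWaux

/-- PBW property: the elements
`g · x₁^{a₁} y₁^{b₁} x₂^{a₂} y₂^{b₂} ⋯ x_N^{a_N} y_N^{b_N}`, for `g ∈ Γ_N` and
`a_i, b_i ∈ ℕ`, form a `ℂ`-vector space basis of `H_{1,k,c}(Γ_N)`: they are linearly
independent and they span. -/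
theorem stmt_3 (Γ : Subgroup SL2) [Fintype Γ] [DecidableEq Γ] (N : ℕ) (k : ℂ) (c : Γ → ℂ)
    (hc : ∀ γ δ : Γ, c (δ * γ * δ⁻¹) = c γ) :
    LinearIndependent ℂ
      (fun p : WP Γ N × (Fin N × Fin 2 → ℕ) => pbwMono Γ N k c p.1 p.2) ∧
    Submodule.span ℂ
      (Set.range fun p : WP Γ N × (Fin N × Fin 2 → ℕ) => pbwMono Γ N k c p.1 p.2) = ⊤ := by
  refine ⟨?_, ?_⟩
  · let L : HN Γ N k c →ₗ[ℂ] PBWaux.Mo Γ N :=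
      { toFun := fun a => (PBWaux.phi k c hc a).unop (PBWaux.zz 0 1)
        map_add' := fun a b => by simp
        map_smul' := fun r a => by simp }
    apply LinearIndependent.of_comp L
    have h1 : L ∘ (fun p : WP Γ N × (Fin N × Fin 2 → ℕ) => pbwMono Γ N k c p.1 p.2) =
        (fun q : Multiset (PBWaux.Idx N) × WP Γ N => Finsupp.single q (1 : ℂ)) ∘
          (fun p : WP Γ N × (Fin N × Fin 2 → ℕ) => (PBWaux.mset p.2, p.1⁻¹)) := by
      funext p
      exact PBWaux.phi_pbw k c hc p.1 p.2
    rw [h1]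
    refine LinearIndependent.comp (Finsupp.linearIndependent_single_one ℂ _) _ ?_
    rintro ⟨g, e⟩ ⟨g', e'⟩ h
    simp only [Prod.mk.injEq, inv_inj] at h
    rw [PBWaux.mset_inj h.1, h.2]
  · rw [eq_top_iff]
    intro a _
    have h1 : a = PBWaux.th k c hc ((PBWaux.phi k c hc a).unop (PBWaux.zz 0 1)) := by
      rw [PBWaux.th_phi, PBWaux.th, PBWaux.theta_zero, inv_one, PBWaux.hG_one, one_mul]
    rw [h1]
    generalize (PBWaux.phi k c hc a).unop (PBWaux.zz 0 1) = x
    induction x using Finsupp.induction_linear with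
    | zero => simp
    | add x y hx hy => rw [map_add]; exact Submodule.add_mem _ hx hy
    | single q r =>
      obtain ⟨m, h⟩ := q
      obtain ⟨e, rfl⟩ := PBWaux.mset_surj m
      have h2 : (Finsupp.single (PBWaux.mset e, h) r : PBWaux.Mo Γ N) =
          r • PBWaux.zz (PBWaux.mset e) (h⁻¹)⁻¹ := by
        simp [PBWaux.zz]
      rw [h2, map_smul, PBWaux.th_zz]
      exact Submodule.smul_mem _ _ (Submodule.subset_span ⟨(h⁻¹, e), rfl⟩)
end
end

section
/- Let Γ be a finite group and G = S_N ⋉ Γ^N the wreath product. If ρ: G → GL(W) is a finite-dimensional complex representation of G whose restriction to the subgroup S_N is irreducible, then there exists a group character χ: Γ → ℂ^× such that ρ((γ_1,…,γ_N)) = χ(γ_1)⋯χ(γ_N) · Id_W for all (γ_1,…,γ_N) ∈ Γ^N; in particular Γ^N acts on W by an S_N-invariant character. -/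
open Module in
theorem schur_aux {N : ℕ} {W : Type} [AddCommGroup W] [Module ℂ W] [FiniteDimensional ℂ W]
    [Nontrivial W] (π : Equiv.Perm (Fin N) →* End ℂ W)
    (hirr : ∀ U : Submodule ℂ W,
      (∀ σ : Equiv.Perm (Fin N), U.map (π σ) ≤ U) → U = ⊥ ∨ U = ⊤)
    (T : End ℂ W) (hT : ∀ σ, π σ * T = T * π σ) : ∃ c : ℂ, T = algebraMap ℂ (End ℂ W) c := by
  obtain ⟨c, hc⟩ := Module.End.exists_eigenvalue T
  refine ⟨c, ?_⟩
  rcases hirr (End.eigenspace T c) (by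
    rintro σ _ ⟨x, hx, rfl⟩
    have hx' : T x = c • x := End.mem_eigenspace_iff.1 hx
    rw [End.mem_eigenspace_iff]
    have := LinearMap.congr_fun (hT σ) x
    simp only [Module.End.mul_apply] at this
    rw [← this, hx', map_smul]) with h | h
  · exact absurd h hc
  · ext x
    have : x ∈ End.eigenspace T c := h ▸ Submodule.mem_top
    simpa [Module.algebraMap_end_apply] using End.mem_eigenspace_iff.1 this

theorem swap_aux {N : ℕ} (l : Fin N → ℂ) (i j : Fin N) (hl : l i ≠ l j)
    (τ : Equiv.Perm (Fin N)) (hτ : τ.IsSwap)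
    (h : l ∘ ⇑τ⁻¹ = l ∘ ⇑(Equiv.swap i j)⁻¹) : τ = Equiv.swap i j := by
  obtain ⟨p, q, hpq, rfl⟩ := hτ
  have hi := congrFun h i
  have hj := congrFun h j
  simp only [Equiv.swap_inv, Function.comp_apply, Equiv.swap_apply_left,
    Equiv.swap_apply_right] at hi hj
  have h1 : i = p ∨ i = q := by
    by_contra hc
    push Not at hc
    rw [Equiv.swap_apply_of_ne_of_ne hc.1 hc.2] at hi
    exact hl hi
  have h2 : j = p ∨ j = q := by
    by_contra hc
    push Not at hc
    rw [Equiv.swap_apply_of_ne_of_ne hc.1 hc.2] at hj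
    exact hl hj.symm
  rcases h1 with rfl | rfl <;> rcases h2 with rfl | rfl
  · exact absurd rfl hl
  · rfl
  · exact Equiv.swap_comm _ _
  · exact absurd rfl hl

open Module in
theorem eq_aux {N : ℕ} {W : Type} [AddCommGroup W] [Module ℂ W] [FiniteDimensional ℂ W]
    [Nontrivial W] (π : Equiv.Perm (Fin N) →* End ℂ W)
    (hirr : ∀ U : Submodule ℂ W,
      (∀ σ : Equiv.Perm (Fin N), U.map (π σ) ≤ U) → U = ⊥ ∨ U = ⊤)
    (a : Fin N → End ℂ W) (hss : ∀ k, (a k).IsSemisimple)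
    (hcomm : ∀ k l, Commute (a k) (a l))
    (hconj : ∀ σ k, π σ * a k = a (σ k) * π σ) (i j : Fin N) : a i = a j := by
  classical
  have hE : ∀ k μ, (a k).maxGenEigenspace μ = (a k).eigenspace μ := fun k μ =>
    (hss k).isFinitelySemisimple.maxGenEigenspace_eq_eigenspace μ
  have htop := End.iSup_iInf_maxGenEigenspace_eq_top_of_iSup_maxGenEigenspace_eq_top_of_commute a
    (fun k l _ => hcomm k l) (fun k => End.iSup_maxGenEigenspace_eq_top (a k))
  have hind := End.independent_iInf_maxGenEigenspace_of_forall_mapsTo a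
    (fun k l => Module.End.mapsTo_maxGenEigenspace_of_comm (hcomm l k))
  simp only [hE] at htop hind
  set E : (Fin N → ℂ) → Submodule ℂ W := fun l => ⨅ k, (a k).eigenspace (l k) with hEdef
  have hmem : ∀ l x, x ∈ E l ↔ ∀ k, a k x = l k • x := by
    intro l x
    simp [hEdef, Submodule.mem_iInf, End.mem_eigenspace_iff]
  have hmove : ∀ (l : Fin N → ℂ) (x : W) (σ : Equiv.Perm (Fin N)), x ∈ E l → π σ x ∈ E (l ∘ ⇑σ⁻¹) := by
    intro l x σ hx
    rw [hmem] at hx ⊢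
    intro k
    have := LinearMap.congr_fun (hconj σ (σ⁻¹ k)) x
    have hk : σ (σ⁻¹ k) = k := σ.apply_symm_apply k
    rw [Module.End.mul_apply, Module.End.mul_apply, hk] at this
    rw [← this, hx, map_smul]; rfl
  let S : Finset (Equiv.Perm (Fin N)) := Finset.univ.filter (fun τ => τ.IsSwap)
  obtain ⟨t, ht⟩ := schur_aux π hirr (∑ τ ∈ S, π τ) (by
    intro σ
    rw [Finset.mul_sum, Finset.sum_mul]
    refine Finset.sum_bij' (fun τ _ => σ * τ * σ⁻¹) (fun τ _ => σ⁻¹ * τ * σ) ?_ ?_ ?_ ?_ ?_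
    · intro τ hτ
      simp only [S, Finset.mem_filter, Finset.mem_univ, true_and,
        Equiv.Perm.isSwap_iff_cycleType] at hτ ⊢
      rw [Equiv.Perm.cycleType_conj, hτ]
    · intro τ hτ
      simp only [S, Finset.mem_filter, Finset.mem_univ, true_and,
        Equiv.Perm.isSwap_iff_cycleType] at hτ ⊢
      have := Equiv.Perm.cycleType_conj (σ := τ) (τ := σ⁻¹)
      rw [inv_inv] at this
      rw [this, hτ]
    · intro τ _; group
    · intro τ _; group
    · intro τ _
      rw [← map_mul, ← map_mul]; congr 1; group)
  have key : ∀ l x, x ∈ E l → a i x = a j x := by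
    intro l x hx
    by_cases hl : l i = l j
    · rw [(hmem l x).1 hx, (hmem l x).1 hx, hl]
    have hij : i ≠ j := fun h => hl (h ▸ rfl)
    set s := Equiv.swap i j with hs
    have hsS : s ∈ S := by
      simp only [S, Finset.mem_filter, Finset.mem_univ, true_and]
      exact ⟨i, j, hij, rfl⟩
    have h1 := LinearMap.congr_fun ht x
    rw [LinearMap.sum_apply, ← Finset.add_sum_erase _ _ hsS, Module.algebraMap_end_apply] at h1
    have h2 : π s x ∈ ⨆ (m) (_ : m ≠ l ∘ ⇑s⁻¹), E m := by
      rw [← eq_sub_iff_add_eq] at h1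
      rw [h1]
      refine Submodule.sub_mem _ (Submodule.smul_mem _ _ ?_) (Submodule.sum_mem _ ?_)
      · refine Submodule.mem_iSup_of_mem l (Submodule.mem_iSup_of_mem ?_ hx)
        intro h
        have := congrFun h i
        simp [hs] at this
        exact hl this
      · intro τ hτ
        rw [Finset.mem_erase] at hτ
        refine Submodule.mem_iSup_of_mem (l ∘ ⇑τ⁻¹) (Submodule.mem_iSup_of_mem ?_ (hmove l x τ hx))
        intro h
        exact hτ.1 (swap_aux l i j hl τ (by simpa [S] using hτ.2) h)
    have h3 : π s x = 0 := Submodule.disjoint_def.1 (hind (l ∘ ⇑s⁻¹)) _ (hmove _ _ _ hx) h2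
    have h4 : x = 0 := by
      have : π s⁻¹ (π s x) = x := by
        rw [← Module.End.mul_apply, ← map_mul, inv_mul_cancel, map_one]; rfl
      rw [← this, h3, map_zero]
    rw [h4, map_zero, map_zero]
  have : (⨆ l, E l) ≤ LinearMap.eqLocus (a i) (a j) := iSup_le fun l x hx => key l x hx
  ext x
  have hx : x ∈ ⨆ l, E l := by rw [htop]; trivial
  exact this hx

theorem ss_aux {W : Type} [AddCommGroup W] [Module ℂ W] [FiniteDimensional ℂ W]
    (f : Module.End ℂ W) (n : ℕ) (hn : n ≠ 0) (h : f ^ n = 1) : f.IsSemisimple := by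
  refine Module.End.isSemisimple_of_squarefree_aeval_eq_zero
    (p := Polynomial.X ^ n - Polynomial.C 1) ?_ ?_
  · exact (Polynomial.separable_X_pow_sub_C 1 (by exact_mod_cast hn) one_ne_zero).squarefree
  · simp [h]


/-- let `Γ` be a finite group and `G = S_N ⋉ Γ^N`.  If `ρ : G → GL(W)` is a
finite dimensional complex representation of `G` whose restriction to the subgroup `S_N`
is irreducible, then there is a character `χ : Γ → ℂˣ` with
`ρ (γ_1, …, γ_N) = χ(γ_1)⋯χ(γ_N) · Id_W` for all `(γ_1, …, γ_N) ∈ Γ^N`. -/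
theorem stmt_4 (N : ℕ) (Γ : Type) [Group Γ] [Finite Γ]
    (W : Type) [AddCommGroup W] [Module ℂ W] [FiniteDimensional ℂ W] [Nontrivial W]
    (ρ : Representation ℂ (WP Γ N) W)
    (hirr : ∀ U : Submodule ℂ W,
      (∀ σ : Equiv.Perm (Fin N), U.map (ρ (SemidirectProduct.inr σ)) ≤ U) → U = ⊥ ∨ U = ⊤) :
    ∃ χ : Γ →* ℂˣ, ∀ f : Fin N → Γ,
      ρ (SemidirectProduct.inl f) = (∏ i : Fin N, (χ (f i) : ℂ)) • LinearMap.id := by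
  classical
  rcases Nat.eq_zero_or_pos N with rfl | hN
  · refine ⟨1, fun f => ?_⟩
    have : f = 1 := Subsingleton.elim _ _
    subst this
    simp
    rfl
  let i0 : Fin N := ⟨0, hN⟩
  let π : Equiv.Perm (Fin N) →* Module.End ℂ W := ρ.comp SemidirectProduct.inr
  let R : (Fin N → Γ) →* Module.End ℂ W := ρ.comp SemidirectProduct.inl
  have hπ : ∀ U : Submodule ℂ W,
      (∀ σ : Equiv.Perm (Fin N), U.map (π σ) ≤ U) → U = ⊥ ∨ U = ⊤ := hirr
  have hconj : ∀ (γ : Γ) (σ : Equiv.Perm (Fin N)) (k : Fin N),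
      π σ * R (Pi.mulSingle k γ) = R (Pi.mulSingle (σ k) γ) * π σ := by
    intro γ σ k
    have h1 : wphi Γ N σ (Pi.mulSingle k γ) = Pi.mulSingle (σ k) γ := by
      funext m
      change (Pi.mulSingle k γ : Fin N → Γ) (σ.symm m) = _
      simp only [Pi.mulSingle_apply, Equiv.symm_apply_eq]
    have h2 := SemidirectProduct.inl_aut (φ := wphi Γ N) σ (Pi.mulSingle k γ)
    rw [h1] at h2
    change ρ _ * ρ _ = ρ _ * ρ _
    rw [← map_mul, ← map_mul, h2, mul_assoc, ← map_mul, inv_mul_cancel, map_one, mul_one]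
  have heq : ∀ (γ : Γ) (i j : Fin N), R (Pi.mulSingle i γ) = R (Pi.mulSingle j γ) := by
    intro γ
    refine eq_aux π hπ (fun k => R (Pi.mulSingle k γ)) ?_ ?_ (hconj γ)
    · intro k
      refine ss_aux _ (orderOf γ) (orderOf_pos γ).ne' ?_
      rw [← map_pow, ← Pi.mulSingle_pow, pow_orderOf_eq_one, Pi.mulSingle_one, map_one]
    · intro k l
      refine Commute.map ?_ R
      rcases eq_or_ne k l with rfl | h
      · exact Commute.refl _
      · exact Pi.mulSingle_commute (f := fun _ : Fin N => Γ) h γ γ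
  have hsc : ∀ γ : Γ, ∃ c : ℂ, R (Pi.mulSingle i0 γ) = algebraMap ℂ (Module.End ℂ W) c := by
    intro γ
    refine schur_aux π hπ _ fun σ => ?_
    rw [hconj, heq γ (σ i0) i0]
  choose c hc using hsc
  have hinj : Function.Injective (algebraMap ℂ (Module.End ℂ W)) := (algebraMap ℂ _).injective
  let c' : Γ →* ℂ :=
    { toFun := c
      map_one' := hinj (by rw [← hc, Pi.mulSingle_one, map_one, map_one])
      map_mul' := fun x y => hinj (by
        rw [← hc, Pi.mulSingle_mul, map_mul, map_mul, hc, hc]) }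
  refine ⟨c'.toHomUnits, fun f => ?_⟩
  let Q : (Fin N → Γ) →* Module.End ℂ W :=
    ((algebraMap ℂ (Module.End ℂ W)) : ℂ →* Module.End ℂ W).comp
      (∏ i : Fin N, c'.comp (Pi.evalMonoidHom (fun _ => Γ) i))
  have hRQ : R = Q := by
    refine MonoidHom.pi_ext fun i x => ?_
    rw [heq x i i0, hc]
    change _ = algebraMap ℂ _ _
    congr 1
    rw [MonoidHom.finsetProd_apply, Finset.prod_eq_single i]
    · simp [c']
    · intro b _ hb
      simp [Pi.mulSingle_eq_of_ne hb]
    · simp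
  have h := DFunLike.congr_fun hRQ f
  change ρ _ = algebraMap ℂ _ _ at h
  rw [h, MonoidHom.finsetProd_apply, Algebra.algebraMap_eq_smul_one]
  rfl
end

section
/- Let W be a finite-dimensional representation of S_N with character ψ_W and Y a finite-dimensional representation of a finite group Γ, and let M = W ⊗ Y^{⊗N} carry the Γ_N-module structure described in the context. Then for all i ≠ j and all γ ∈ Γ, the trace of s_{ij}·γ_i·γ_j^{-1} acting on M equals ψ_W(s_{ij}) · (dim Y)^{N−1}. -/
open scoped TensorProduct

theorem aux_sum1 {κ ι : Type*} [Fintype κ] [DecidableEq κ] [Fintype ι] [DecidableEq ι] (j : κ)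
    (h : ι → ℂ) : ∑ f : κ → ι, h (f j) =
      (Fintype.card ι : ℂ) ^ (Fintype.card κ - 1) * ∑ a, h a := by
  rw [← (Equiv.funSplitAt j ι).symm.sum_comp, Fintype.sum_prod_type]
  simp [Equiv.funSplitAt, Equiv.piSplitAt, Finset.mul_sum, Fintype.card_subtype_compl]

theorem aux_sum2 {κ ι : Type*} [Fintype κ] [DecidableEq κ] [Fintype ι] [DecidableEq ι] (i j : κ)
    (hij : i ≠ j) (h : ι → ι → ℂ) : ∑ f : κ → ι, h (f i) (f j) =
      (Fintype.card ι : ℂ) ^ (Fintype.card κ - 2) * ∑ a, ∑ b, h a b := by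
  rw [← (Equiv.funSplitAt i ι).symm.sum_comp, Fintype.sum_prod_type]
  simp only [Equiv.funSplitAt, Equiv.piSplitAt, Equiv.coe_fn_symm_mk, hij.symm, dite_true,
    dite_false]
  have := fun a => aux_sum1 (κ := {l // l ≠ i}) ⟨j, hij.symm⟩ (h a)
  simp only [this, Finset.mul_sum]
  simp [Fintype.card_subtype_compl, Nat.sub_sub]

theorem aux_trace (N : ℕ) (Y : Type) [AddCommGroup Y] [Module ℂ Y] [FiniteDimensional ℂ Y]
    (A B : Y →ₗ[ℂ] Y) (hAB : A ∘ₗ B = LinearMap.id) (i j : Fin N) (hij : i ≠ j)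
    (P : (⨂[ℂ] _ : Fin N, Y) →ₗ[ℂ] (⨂[ℂ] _ : Fin N, Y))
    (hP : ∀ v : Fin N → Y, P (PiTensorProduct.tprod ℂ v) = PiTensorProduct.tprod ℂ fun l =>
          if l = j then A (v i) else if l = i then B (v j) else v l) :
    LinearMap.trace ℂ _ P = (Module.finrank ℂ Y : ℂ) ^ (N - 1) := by
  classical
  let b := Module.finBasis ℂ Y
  let c := Basis.piTensorProduct (fun _ : Fin N => b)
  have key : ∀ f : Fin N → Fin (Module.finrank ℂ Y),
      c.repr (P (c f)) f = b.repr (A (b (f i))) (f j) * b.repr (B (b (f j))) (f i) := by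
    intro f
    simp only [c, Basis.piTensorProduct_apply, hP, Basis.piTensorProduct_repr_tprod_apply]
    rw [← Finset.mul_prod_erase _ _ (Finset.mem_univ j),
      ← Finset.mul_prod_erase _ _ (Finset.mem_erase.2 ⟨hij, Finset.mem_univ i⟩),
      Finset.prod_eq_one]
    · simp [hij]
    · intro l hl
      simp only [Finset.mem_erase] at hl
      simp [hl.1, hl.2.1]
  rw [LinearMap.trace_eq_matrix_trace ℂ c]
  simp only [Matrix.trace, Matrix.diag_apply, LinearMap.toMatrix_apply, key]
  rw [aux_sum2 i j hij (fun a a' => b.repr (A (b a)) a' * b.repr (B (b a')) a)]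
  have h2 : ∑ a, ∑ a', b.repr (A (b a)) a' * b.repr (B (b a')) a = (Module.finrank ℂ Y : ℂ) := by
    have : LinearMap.trace ℂ Y (A ∘ₗ B) = (Module.finrank ℂ Y : ℂ) := by
      rw [hAB, LinearMap.trace_id]
    rw [← this, LinearMap.trace_eq_matrix_trace ℂ b, LinearMap.toMatrix_comp b b b,
      Finset.sum_comm]
    simp [Matrix.trace, Matrix.mul_apply, LinearMap.toMatrix_apply]
  rw [h2, Fintype.card_fin, Fintype.card_fin, ← pow_succ]
  have : 2 ≤ N := by
    have := i.2; have := j.2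
    have : (i : ℕ) ≠ j := fun h => hij (Fin.ext h)
    omega
  congr 1
  omega



theorem aux_exists (N : ℕ) (Y : Type) [AddCommGroup Y] [Module ℂ Y]
    (A B : Y →ₗ[ℂ] Y) (i j : Fin N) (hij : i ≠ j) :
    ∃ P : (⨂[ℂ] _ : Fin N, Y) →ₗ[ℂ] (⨂[ℂ] _ : Fin N, Y),
    ∀ v : Fin N → Y, P (PiTensorProduct.tprod ℂ v) = PiTensorProduct.tprod ℂ fun l =>
          if l = j then A (v i) else if l = i then B (v j) else v l := by
  let g : Fin N → (Y →ₗ[ℂ] Y) := fun l => if l = j then A else if l = i then B else LinearMap.id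
  let m : MultilinearMap ℂ (fun _ : Fin N => Y) (⨂[ℂ] _ : Fin N, Y) :=
    (PiTensorProduct.tprod ℂ).compLinearMap g
  refine ⟨PiTensorProduct.lift (m.domDomCongr (Equiv.swap i j)), fun v => ?_⟩
  rw [PiTensorProduct.lift.tprod, MultilinearMap.domDomCongr_apply]
  simp only [m, MultilinearMap.compLinearMap_apply]
  congr 1
  funext l
  by_cases h1 : l = j
  · subst h1; simp [g]
  · by_cases h2 : l = i
    · subst h2; simp [g, h1]
    · simp [g, h1, h2, Equiv.swap_apply_of_ne_of_ne]

/-- let `W` be a finite dimensional representation of `S_N` with character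
`ψ_W` and `Y` a finite dimensional representation of a finite group `Γ`, and let
`M = W ⊗ Y^{⊗N}` be the `Γ_N = S_N ⋉ Γ^N`-module where `Γ^N` acts factorwise on `Y^{⊗N}`
(trivially on `W`) and `S_N` acts on `W` while permuting the tensor factors.  Then for
`i ≠ j` and `γ ∈ Γ`, the trace of `s_{ij} γ_i γ_j⁻¹` on `M` (the operator `T` below)
equals `ψ_W(s_{ij}) · (dim Y)^(N-1)`. -/
theorem stmt_8 (N : ℕ) (Γ : Type) [Group Γ] [Finite Γ]
    (W Y : Type) [AddCommGroup W] [Module ℂ W] [FiniteDimensional ℂ W]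
    [AddCommGroup Y] [Module ℂ Y] [FiniteDimensional ℂ Y]
    (ρW : Representation ℂ (Equiv.Perm (Fin N)) W) (ρY : Representation ℂ Γ Y)
    (γ : Γ) (i j : Fin N) (hij : i ≠ j)
    (T : (W ⊗[ℂ] (⨂[ℂ] _ : Fin N, Y)) →ₗ[ℂ] W ⊗[ℂ] (⨂[ℂ] _ : Fin N, Y))
    (hT : ∀ (w : W) (v : Fin N → Y),
      T (w ⊗ₜ[ℂ] PiTensorProduct.tprod ℂ v) =
        ρW (Equiv.swap i j) w ⊗ₜ[ℂ] PiTensorProduct.tprod ℂ fun l =>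
          if l = j then ρY γ (v i) else if l = i then ρY γ⁻¹ (v j) else v l) :
    LinearMap.trace ℂ _ T =
      LinearMap.trace ℂ W (ρW (Equiv.swap i j)) * (Module.finrank ℂ Y : ℂ) ^ (N - 1) := by
  classical
  obtain ⟨e, he⟩ := aux_exists N Y (ρY γ) (ρY γ⁻¹) i j hij
  have hTe : T = TensorProduct.map (ρW (Equiv.swap i j)) e := by
    apply TensorProduct.ext
    ext w v
    simp [hT, he]
  rw [hTe, LinearMap.trace_tensorProduct', aux_trace N Y (ρY γ) (ρY γ⁻¹) _ i j hij e he]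
  rw [← Module.End.mul_eq_comp, ← map_mul]
  simp
  rfl
end
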